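/- Let A be a differential graded Poisson algebra over a field k and set A^𝓔 := A ⊗ A^{op}, a differential graded Poisson algebra with the tensor product structure. Then (A^𝓔)^e ≅ (A^e)^𝓔 as differential graded algebras, where (A^e)^𝓔 := A^e ⊗ (A^e)^{op}. -/

import Mathlib

open scoped TensorProduct

noncomputable section

namespace DGPaper

universe u

/-- A differential graded Lie algebra structure on a `k`-vector space `V`. -/
structure DGLAOn (k : Type u) [Field k] (V : Type u) [AddCommGroup V] [Module k V] where
  gr : ℤ → Submodule k V
  decomp : DirectSum.Decomposition gr
  br : V →ₗ[k] V →ₗ[k] V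
  br_mem : ∀ {i j : ℤ} {a b : V}, a ∈ gr i → b ∈ gr j → br a b ∈ gr (i + j)
  br_antisymm : ∀ {i j : ℤ} {a b : V}, a ∈ gr i → b ∈ gr j →
    br a b = -(((-1 : k) ^ (i * j)) • br b a)
  br_jacobi : ∀ {i j l : ℤ} {a b c : V}, a ∈ gr i → b ∈ gr j → c ∈ gr l →
    br a (br b c) = br (br a b) c + ((-1 : k) ^ (i * j)) • br b (br a c)
  d : V →ₗ[k] V
  d_mem : ∀ {i : ℤ} {a : V}, a ∈ gr i → d a ∈ gr (i + 1)
  d_sq : ∀ a : V, d (d a) = 0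
  d_br : ∀ {i j : ℤ} {a b : V}, a ∈ gr i → b ∈ gr j →
    d (br a b) = br (d a) b + ((-1 : k) ^ i) • br a (d b)

/-- A differential graded (associative, unital) algebra structure on a `k`-vector space `N`. -/
structure DGAOn (k : Type u) [Field k] (N : Type u) [AddCommGroup N] [Module k N] where
  gr : ℤ → Submodule k N
  decomp : DirectSum.Decomposition gr
  mul : N →ₗ[k] N →ₗ[k] N
  one : N
  one_mem : one ∈ gr 0
  mul_mem : ∀ {i j : ℤ} {a b : N}, a ∈ gr i → b ∈ gr j → mul a b ∈ gr (i + j)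
  mul_assoc : ∀ a b c : N, mul (mul a b) c = mul a (mul b c)
  one_mul : ∀ a : N, mul one a = a
  mul_one : ∀ a : N, mul a one = a
  d : N →ₗ[k] N
  d_mem : ∀ {i : ℤ} {a : N}, a ∈ gr i → d a ∈ gr (i + 1)
  d_sq : ∀ a : N, d (d a) = 0
  d_mul : ∀ {i j : ℤ} {a b : N}, a ∈ gr i → b ∈ gr j →
    d (mul a b) = mul (d a) b + ((-1 : k) ^ i) • mul a (d b)

/-- A differential graded Poisson algebra structure on a `k`-vector space `M`. -/
structure DGPAOn (k : Type u) [Field k] (M : Type u) [AddCommGroup M] [Module k M] where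
  gr : ℤ → Submodule k M
  decomp : DirectSum.Decomposition gr
  mul : M →ₗ[k] M →ₗ[k] M
  one : M
  one_mem : one ∈ gr 0
  mul_mem : ∀ {i j : ℤ} {a b : M}, a ∈ gr i → b ∈ gr j → mul a b ∈ gr (i + j)
  mul_assoc : ∀ a b c : M, mul (mul a b) c = mul a (mul b c)
  one_mul : ∀ a : M, mul one a = a
  mul_one : ∀ a : M, mul a one = a
  mul_comm : ∀ {i j : ℤ} {a b : M}, a ∈ gr i → b ∈ gr j →
    mul a b = ((-1 : k) ^ (i * j)) • mul b a
  br : M →ₗ[k] M →ₗ[k] M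
  br_mem : ∀ {i j : ℤ} {a b : M}, a ∈ gr i → b ∈ gr j → br a b ∈ gr (i + j)
  br_antisymm : ∀ {i j : ℤ} {a b : M}, a ∈ gr i → b ∈ gr j →
    br a b = -(((-1 : k) ^ (i * j)) • br b a)
  br_jacobi : ∀ {i j l : ℤ} {a b c : M}, a ∈ gr i → b ∈ gr j → c ∈ gr l →
    br a (br b c) = br (br a b) c + ((-1 : k) ^ (i * j)) • br b (br a c)
  br_deriv : ∀ {i j l : ℤ} {a b c : M}, a ∈ gr i → b ∈ gr j → c ∈ gr l →
    br a (mul b c) = mul (br a b) c + ((-1 : k) ^ (i * j)) • mul b (br a c)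
  d : M →ₗ[k] M
  d_mem : ∀ {i : ℤ} {a : M}, a ∈ gr i → d a ∈ gr (i + 1)
  d_sq : ∀ a : M, d (d a) = 0
  d_br : ∀ {i j : ℤ} {a b : M}, a ∈ gr i → b ∈ gr j →
    d (br a b) = br (d a) b + ((-1 : k) ^ i) • br a (d b)
  d_mul : ∀ {i j : ℤ} {a b : M}, a ∈ gr i → b ∈ gr j →
    d (mul a b) = mul (d a) b + ((-1 : k) ^ i) • mul a (d b)

section Defs

variable {k : Type u} [Field k]

/-- The differential graded Lie algebra underlying a differential graded Poisson algebra. -/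
def DGPAOn.toLie {M : Type u} [AddCommGroup M] [Module k M] (P : DGPAOn k M) :
    DGLAOn k M where
  gr := P.gr
  decomp := P.decomp
  br := P.br
  br_mem := P.br_mem
  br_antisymm := P.br_antisymm
  br_jacobi := P.br_jacobi
  d := P.d
  d_mem := P.d_mem
  d_sq := P.d_sq
  d_br := P.d_br

section Maps

variable {M N : Type u} [AddCommGroup M] [Module k M] [AddCommGroup N] [Module k N]

/-- A morphism of differential graded algebras (degree-0, multiplicative, unital,
commuting with the differentials). -/
def IsDGAHom (E : DGAOn k M) (F : DGAOn k N) (f : M →ₗ[k] N) : Prop :=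
  (∀ {n : ℤ} {x : M}, x ∈ E.gr n → f x ∈ F.gr n) ∧
  (∀ x y : M, f (E.mul x y) = F.mul (f x) (f y)) ∧
  f E.one = F.one ∧
  ∀ x : M, f (E.d x) = F.d (f x)

/-- A morphism of differential graded Poisson algebras. -/
def IsDGPAHom (P : DGPAOn k M) (Q : DGPAOn k N) (f : M →ₗ[k] N) : Prop :=
  (∀ {n : ℤ} {x : M}, x ∈ P.gr n → f x ∈ Q.gr n) ∧
  (∀ x y : M, f (P.mul x y) = Q.mul (f x) (f y)) ∧
  f P.one = Q.one ∧
  (∀ x : M, f (P.d x) = Q.d (f x)) ∧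
  ∀ x y : M, f (P.br x y) = Q.br (f x) (f y)

end Maps

section Tensor

variable {A B : Type u} [AddCommGroup A] [Module k A] [AddCommGroup B] [Module k B]

/-- `R` is the tensor product differential graded Poisson algebra structure on `A ⊗[k] B`
induced by `P` and `Q`. -/
def IsTensorDGPA (P : DGPAOn k A) (Q : DGPAOn k B) (R : DGPAOn k (A ⊗[k] B)) : Prop :=
  (∀ n : ℤ, R.gr n = Submodule.span k {z : A ⊗[k] B |
      ∃ (i j : ℤ) (a : A) (b : B), i + j = n ∧ a ∈ P.gr i ∧ b ∈ Q.gr j ∧ z = a ⊗ₜ[k] b}) ∧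
  R.one = P.one ⊗ₜ[k] Q.one ∧
  (∀ {i j i' j' : ℤ} {a a' : A} {b b' : B},
      a ∈ P.gr i → b ∈ Q.gr j → a' ∈ P.gr i' → b' ∈ Q.gr j' →
    R.mul (a ⊗ₜ[k] b) (a' ⊗ₜ[k] b') = ((-1 : k) ^ (i' * j)) • (P.mul a a' ⊗ₜ[k] Q.mul b b')) ∧
  (∀ {i j : ℤ} {a : A} {b : B}, a ∈ P.gr i → b ∈ Q.gr j →
    R.d (a ⊗ₜ[k] b) = P.d a ⊗ₜ[k] b + ((-1 : k) ^ i) • (a ⊗ₜ[k] Q.d b)) ∧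
  (∀ {i j i' j' : ℤ} {a a' : A} {b b' : B},
      a ∈ P.gr i → b ∈ Q.gr j → a' ∈ P.gr i' → b' ∈ Q.gr j' →
    R.br (a ⊗ₜ[k] b) (a' ⊗ₜ[k] b') =
      ((-1 : k) ^ (i' * j)) • (P.br a a' ⊗ₜ[k] Q.mul b b' + P.mul a a' ⊗ₜ[k] Q.br b b'))

/-- `G` is the tensor product differential graded algebra structure on `A ⊗[k] B`
induced by `E` and `F` (with the Koszul sign rule). -/
def IsTensorDGA (E : DGAOn k A) (F : DGAOn k B) (G : DGAOn k (A ⊗[k] B)) : Prop :=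
  (∀ n : ℤ, G.gr n = Submodule.span k {z : A ⊗[k] B |
      ∃ (i j : ℤ) (x : A) (y : B), i + j = n ∧ x ∈ E.gr i ∧ y ∈ F.gr j ∧ z = x ⊗ₜ[k] y}) ∧
  G.one = E.one ⊗ₜ[k] F.one ∧
  (∀ {i j i' j' : ℤ} {x x' : A} {y y' : B},
      x ∈ E.gr i → y ∈ F.gr j → x' ∈ E.gr i' → y' ∈ F.gr j' →
    G.mul (x ⊗ₜ[k] y) (x' ⊗ₜ[k] y') = ((-1 : k) ^ (i' * j)) • (E.mul x x' ⊗ₜ[k] F.mul y y')) ∧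
  (∀ {i j : ℤ} {x : A} {y : B}, x ∈ E.gr i → y ∈ F.gr j →
    G.d (x ⊗ₜ[k] y) = E.d x ⊗ₜ[k] y + ((-1 : k) ^ i) • (x ⊗ₜ[k] F.d y))

end Tensor

section Env

variable {M : Type u} [AddCommGroup M] [Module k M]

/-- The defining relations of the universal enveloping algebra `A^e` of a differential
graded Poisson algebra, imposed on the tensor algebra of `M × M`; the first copy of `M`
gives the generators `m_a`, the second copy the generators `h_a`. -/
inductive EnvRel (P : DGPAOn k M) :
    TensorAlgebra k (M × M) → TensorAlgebra k (M × M) → Prop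
  | relone : EnvRel P (TensorAlgebra.ι k ((P.one, 0) : M × M)) 1
  | relmul (a b : M) :
      EnvRel P (TensorAlgebra.ι k ((P.mul a b, 0) : M × M))
        (TensorAlgebra.ι k ((a, 0) : M × M) * TensorAlgebra.ι k ((b, 0) : M × M))
  | relhmul {i j : ℤ} {a b : M} (ha : a ∈ P.gr i) (hb : b ∈ P.gr j) :
      EnvRel P (TensorAlgebra.ι k ((0, P.mul a b) : M × M))
        (TensorAlgebra.ι k ((a, 0) : M × M) * TensorAlgebra.ι k ((0, b) : M × M) +
          ((-1 : k) ^ (i * j)) •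
            (TensorAlgebra.ι k ((b, 0) : M × M) * TensorAlgebra.ι k ((0, a) : M × M)))
  | relmbr {i j : ℤ} {a b : M} (ha : a ∈ P.gr i) (hb : b ∈ P.gr j) :
      EnvRel P (TensorAlgebra.ι k ((P.br a b, 0) : M × M))
        (TensorAlgebra.ι k ((0, a) : M × M) * TensorAlgebra.ι k ((b, 0) : M × M) -
          ((-1 : k) ^ (i * j)) •
            (TensorAlgebra.ι k ((b, 0) : M × M) * TensorAlgebra.ι k ((0, a) : M × M)))
  | relhbr {i j : ℤ} {a b : M} (ha : a ∈ P.gr i) (hb : b ∈ P.gr j) :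
      EnvRel P (TensorAlgebra.ι k ((0, P.br a b) : M × M))
        (TensorAlgebra.ι k ((0, a) : M × M) * TensorAlgebra.ι k ((0, b) : M × M) -
          ((-1 : k) ^ (i * j)) •
            (TensorAlgebra.ι k ((0, b) : M × M) * TensorAlgebra.ι k ((0, a) : M × M)))

/-- The universal enveloping algebra `A^e` of a differential graded Poisson algebra,
as a quotient of the tensor algebra on two copies of `A`. -/
abbrev Env (P : DGPAOn k M) : Type u := RingQuot (EnvRel P)

/-- The generators `m_a` of `A^e`. -/
def mgen (P : DGPAOn k M) : M →ₗ[k] Env P :=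
  (RingQuot.mkAlgHom k (EnvRel P)).toLinearMap ∘ₗ
    ((TensorAlgebra.ι k : (M × M) →ₗ[k] TensorAlgebra k (M × M)) ∘ₗ LinearMap.inl k M M)

/-- The generators `h_a` of `A^e`. -/
def hgen (P : DGPAOn k M) : M →ₗ[k] Env P :=
  (RingQuot.mkAlgHom k (EnvRel P)).toLinearMap ∘ₗ
    ((TensorAlgebra.ι k : (M × M) →ₗ[k] TensorAlgebra k (M × M)) ∘ₗ LinearMap.inr k M M)

/-- `E` is the differential graded algebra structure on `A^e`, with the ring
multiplication of `A^e`, grading `|m_a| = |h_a| = |a|` and differential determined by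
`∂(m_a) = m_{d a}`, `∂(h_a) = h_{d a}` and the graded Leibniz rule. -/
def IsEnvDGA (P : DGPAOn k M) (E : DGAOn k (Env P)) : Prop :=
  (∀ x y : Env P, E.mul x y = x * y) ∧
  E.one = 1 ∧
  (∀ {i : ℤ} {a : M}, a ∈ P.gr i → mgen P a ∈ E.gr i) ∧
  (∀ {i : ℤ} {a : M}, a ∈ P.gr i → hgen P a ∈ E.gr i) ∧
  (∀ a : M, E.d (mgen P a) = mgen P (P.d a)) ∧
  (∀ a : M, E.d (hgen P a) = hgen P (P.d a))

end Env

section Lie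

variable {V : Type u} [AddCommGroup V] [Module k V]

/-- The defining relations of the universal enveloping algebra of a differential graded
Lie algebra. -/
inductive LieRel (L : DGLAOn k V) : TensorAlgebra k V → TensorAlgebra k V → Prop
  | rel {i j : ℤ} {a b : V} (ha : a ∈ L.gr i) (hb : b ∈ L.gr j) :
      LieRel L
        (TensorAlgebra.ι k a * TensorAlgebra.ι k b -
          ((-1 : k) ^ (i * j)) • (TensorAlgebra.ι k b * TensorAlgebra.ι k a))
        (TensorAlgebra.ι k (L.br a b))

/-- The universal enveloping algebra `U(L)` of a differential graded Lie algebra `L`. -/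
abbrev ULie (L : DGLAOn k V) : Type u := RingQuot (LieRel L)

/-- The canonical map `L → U(L)`. -/
def uGen (L : DGLAOn k V) : V →ₗ[k] ULie L :=
  (RingQuot.mkAlgHom k (LieRel L)).toLinearMap ∘ₗ TensorAlgebra.ι k

/-- `E` is the differential graded algebra structure of `U(L)`. -/
def IsULieDGA (L : DGLAOn k V) (E : DGAOn k (ULie L)) : Prop :=
  (∀ x y : ULie L, E.mul x y = x * y) ∧
  E.one = 1 ∧
  (∀ {i : ℤ} {a : V}, a ∈ L.gr i → uGen L a ∈ E.gr i) ∧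
  (∀ a : V, E.d (uGen L a) = uGen L (L.d a))

/-- The graded-symmetry relations defining the graded symmetric algebra of `L`. -/
inductive SymRel (L : DGLAOn k V) : TensorAlgebra k V → TensorAlgebra k V → Prop
  | rel {i j : ℤ} {a b : V} (ha : a ∈ L.gr i) (hb : b ∈ L.gr j) :
      SymRel L (TensorAlgebra.ι k a * TensorAlgebra.ι k b)
        (((-1 : k) ^ (i * j)) • (TensorAlgebra.ι k b * TensorAlgebra.ι k a))

/-- The graded symmetric algebra `𝕊L` of a differential graded Lie algebra `L`. -/
abbrev SymAlg (L : DGLAOn k V) : Type u := RingQuot (SymRel L)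

/-- The canonical map `L → 𝕊L`. -/
def sGen (L : DGLAOn k V) : V →ₗ[k] SymAlg L :=
  (RingQuot.mkAlgHom k (SymRel L)).toLinearMap ∘ₗ TensorAlgebra.ι k

/-- `R` is the differential graded Poisson algebra structure on `𝕊L` with differential
extending `d` and bracket extending the Lie bracket of `L` as a graded biderivation. -/
def IsSymDGPA (L : DGLAOn k V) (R : DGPAOn k (SymAlg L)) : Prop :=
  (∀ x y : SymAlg L, R.mul x y = x * y) ∧
  R.one = 1 ∧
  (∀ {i : ℤ} {a : V}, a ∈ L.gr i → sGen L a ∈ R.gr i) ∧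
  (∀ a : V, R.d (sGen L a) = sGen L (L.d a)) ∧
  (∀ a b : V, R.br (sGen L a) (sGen L b) = sGen L (L.br a b))

/-- `S` is the graded semidirect product differential graded Lie algebra `L ⋊ L`. -/
def IsSemidirect (L : DGLAOn k V) (S : DGLAOn k (V × V)) : Prop :=
  (∀ n : ℤ, S.gr n = (L.gr n).prod (L.gr n)) ∧
  (∀ z : V × V, S.d z = (L.d z.1, L.d z.2)) ∧
  (∀ {i j : ℤ} {x₁ x₂ y₁ y₂ : V}, x₁ ∈ L.gr i → x₂ ∈ L.gr i → y₁ ∈ L.gr j → y₂ ∈ L.gr j →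
    S.br (x₁, x₂) (y₁, y₂) =
      (L.br x₂ y₁ - ((-1 : k) ^ (i * j)) • L.br y₂ x₁, L.br x₂ y₂))

end Lie

section Smash

variable {M : Type u} [AddCommGroup M] [Module k M]

/-- The generators `1#(ab) - a#b - (-1)^{|a||b|} b#a` of the ideal defining `A^E`
inside the smash product `A # U(A)`. -/
def smashGens (P : DGPAOn k M) : Set (M ⊗[k] ULie P.toLie) :=
  {z | ∃ (i j : ℤ) (a b : M), a ∈ P.gr i ∧ b ∈ P.gr j ∧
    z = P.one ⊗ₜ[k] uGen P.toLie (P.mul a b) - a ⊗ₜ[k] uGen P.toLie b -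
        ((-1 : k) ^ (i * j)) • (b ⊗ₜ[k] uGen P.toLie a)}

/-- The two-sided ideal generated by a set `T` in a differential graded algebra `S`. -/
def idealGen {N : Type u} [AddCommGroup N] [Module k N] (S : DGAOn k N) (T : Set N) :
    Submodule k N :=
  sInf {I : Submodule k N | T ⊆ I ∧ ∀ x ∈ I, ∀ y : N, S.mul x y ∈ I ∧ S.mul y x ∈ I}

/-- `S` is the smash product differential graded algebra `A # U(A)`. -/
def IsSmash (P : DGPAOn k M) (EU : DGAOn k (ULie P.toLie))
    (S : DGAOn k (M ⊗[k] ULie P.toLie)) : Prop :=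
  S.one = P.one ⊗ₜ[k] (1 : ULie P.toLie) ∧
  (∀ a b : M, S.mul (a ⊗ₜ[k] (1 : ULie P.toLie)) (b ⊗ₜ[k] (1 : ULie P.toLie)) =
      P.mul a b ⊗ₜ[k] (1 : ULie P.toLie)) ∧
  (∀ u v : ULie P.toLie, S.mul (P.one ⊗ₜ[k] u) (P.one ⊗ₜ[k] v) = P.one ⊗ₜ[k] (u * v)) ∧
  (∀ (a : M) (u : ULie P.toLie), S.mul (a ⊗ₜ[k] (1 : ULie P.toLie)) (P.one ⊗ₜ[k] u) =
      a ⊗ₜ[k] u) ∧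
  (∀ {i j : ℤ} {c b : M}, c ∈ P.gr i → b ∈ P.gr j →
    S.mul (P.one ⊗ₜ[k] uGen P.toLie c) (b ⊗ₜ[k] (1 : ULie P.toLie)) =
      P.br c b ⊗ₜ[k] (1 : ULie P.toLie) + ((-1 : k) ^ (i * j)) • (b ⊗ₜ[k] uGen P.toLie c)) ∧
  (∀ {i j : ℤ} {a : M} {u : ULie P.toLie}, a ∈ P.gr i → u ∈ EU.gr j →
      a ⊗ₜ[k] u ∈ S.gr (i + j)) ∧
  (∀ {i : ℤ} {a : M}, a ∈ P.gr i → ∀ u : ULie P.toLie,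
    S.d (a ⊗ₜ[k] u) = P.d a ⊗ₜ[k] u + ((-1 : k) ^ i) • (a ⊗ₜ[k] EU.d u))

/-- `R` is the quotient differential graded algebra structure of `S` by the ideal `I`. -/
def IsQuotDGA {N : Type u} [AddCommGroup N] [Module k N] (S : DGAOn k N)
    (I : Submodule k N) (R : DGAOn k (N ⧸ I)) : Prop :=
  (∀ n : ℤ, R.gr n = Submodule.map I.mkQ (S.gr n)) ∧
  R.one = I.mkQ S.one ∧
  (∀ x y : N, R.mul (I.mkQ x) (I.mkQ y) = I.mkQ (S.mul x y)) ∧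
  (∀ x : N, R.d (I.mkQ x) = I.mkQ (S.d x))

end Smash

section Op

variable {M N : Type u} [AddCommGroup M] [Module k M] [AddCommGroup N] [Module k N]

/-- `P'` is the opposite differential graded Poisson algebra of `P` (the product is
unchanged by graded commutativity, the bracket is negated). -/
def IsOpDGPA (P P' : DGPAOn k M) : Prop :=
  P'.gr = P.gr ∧ (∀ x y : M, P'.mul x y = P.mul x y) ∧ P'.one = P.one ∧ P'.d = P.d ∧
  (∀ x y : M, P'.br x y = - P.br x y)

/-- `E'` is the opposite differential graded algebra of `E` (with the Koszul sign). -/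
def IsOpDGA (E E' : DGAOn k N) : Prop :=
  E'.gr = E.gr ∧ E'.one = E.one ∧ E'.d = E.d ∧
  (∀ {i j : ℤ} {x y : N}, x ∈ E.gr i → y ∈ E.gr j →
    E'.mul x y = ((-1 : k) ^ (i * j)) • E.mul y x)

end Op

section UEnv

variable {M N : Type u} [AddCommGroup M] [Module k M] [AddCommGroup N] [Module k N]

/-- A pair `(f, g)` where `f : A → D` is a differential graded algebra map and
`g : A → D_L` is a differential graded Lie algebra map (into the graded commutator Lie
structure of `D`), satisfying the two compatibility conditions of the universal property
of the universal enveloping algebra of a differential graded Poisson algebra. -/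
def UEPair (P : DGPAOn k M) (D : DGAOn k N) (f g : M →ₗ[k] N) : Prop :=
  (∀ {n : ℤ} {x : M}, x ∈ P.gr n → f x ∈ D.gr n) ∧
  (∀ {n : ℤ} {x : M}, x ∈ P.gr n → g x ∈ D.gr n) ∧
  (∀ a b : M, f (P.mul a b) = D.mul (f a) (f b)) ∧
  f P.one = D.one ∧
  (∀ a : M, f (P.d a) = D.d (f a)) ∧
  (∀ a : M, g (P.d a) = D.d (g a)) ∧
  (∀ {i j : ℤ} {a b : M}, a ∈ P.gr i → b ∈ P.gr j →
    g (P.br a b) = D.mul (g a) (g b) - ((-1 : k) ^ (i * j)) • D.mul (g b) (g a)) ∧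
  (∀ {i j : ℤ} {a b : M}, a ∈ P.gr i → b ∈ P.gr j →
    f (P.br a b) = D.mul (g a) (f b) - ((-1 : k) ^ (i * j)) • D.mul (f b) (g a)) ∧
  (∀ {i j : ℤ} {a b : M}, a ∈ P.gr i → b ∈ P.gr j →
    g (P.mul a b) = D.mul (f a) (g b) + ((-1 : k) ^ (i * j)) • D.mul (f b) (g a))

/-- `(E, α, β)` is a universal enveloping algebra of the differential graded Poisson
algebra `P`. -/
def IsUEnv (P : DGPAOn k M) (E : DGAOn k N) (α β : M →ₗ[k] N) : Prop :=
  UEPair P E α β ∧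
  ∀ (D' : Type u) [AddCommGroup D'] [Module k D'] (D : DGAOn k D') (f g : M →ₗ[k] D'),
    UEPair P D f g →
    ∃! φ : N →ₗ[k] D',
      IsDGAHom E D φ ∧ (∀ a : M, φ (α a) = f a) ∧ (∀ a : M, φ (β a) = g a)

end UEnv

section IdealsQuotients

variable {M : Type u} [AddCommGroup M] [Module k M]

/-- `B` is a differential graded Poisson ideal of `P`. -/
def IsDGPIdeal (P : DGPAOn k M) (B : Submodule k M) : Prop :=
  (B = ⨆ n : ℤ, B ⊓ P.gr n) ∧
  (∀ x ∈ B, P.d x ∈ B) ∧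
  (∀ x ∈ B, ∀ a : M, P.mul x a ∈ B) ∧
  (∀ x ∈ B, ∀ a : M, P.mul a x ∈ B) ∧
  (∀ x ∈ B, ∀ a : M, P.br a x ∈ B)

/-- `B` is a differential graded Poisson subalgebra of `P`. -/
def IsDGPSubalg (P : DGPAOn k M) (B : Submodule k M) : Prop :=
  (B = ⨆ n : ℤ, B ⊓ P.gr n) ∧ P.one ∈ B ∧
  (∀ x ∈ B, ∀ y ∈ B, P.mul x y ∈ B) ∧
  (∀ x ∈ B, P.d x ∈ B) ∧
  (∀ x ∈ B, ∀ y ∈ B, P.br x y ∈ B)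

/-- `R` is the quotient differential graded Poisson algebra structure on `M ⧸ B`. -/
def IsQuotDGPA (P : DGPAOn k M) (B : Submodule k M) (R : DGPAOn k (M ⧸ B)) : Prop :=
  (∀ n : ℤ, R.gr n = Submodule.map B.mkQ (P.gr n)) ∧
  R.one = B.mkQ P.one ∧
  (∀ x y : M, R.mul (B.mkQ x) (B.mkQ y) = B.mkQ (P.mul x y)) ∧
  (∀ x : M, R.d (B.mkQ x) = B.mkQ (P.d x)) ∧
  (∀ x y : M, R.br (B.mkQ x) (B.mkQ y) = B.mkQ (P.br x y))

/-- `S` is the differential graded Poisson algebra structure induced on a differential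
graded Poisson subalgebra `B` of `P`. -/
def IsSubDGPA (P : DGPAOn k M) (B : Submodule k M) (S : DGPAOn k B) : Prop :=
  (∀ n : ℤ, S.gr n = Submodule.comap B.subtype (P.gr n)) ∧
  ((S.one : M) = P.one) ∧
  (∀ x y : B, (S.mul x y : M) = P.mul (x : M) (y : M)) ∧
  (∀ x : B, (S.d x : M) = P.d (x : M)) ∧
  (∀ x y : B, (S.br x y : M) = P.br (x : M) (y : M))

/-- The cocycles `ker d` of a differential graded Poisson algebra. -/
def Cocycles (P : DGPAOn k M) : Submodule k M := LinearMap.ker P.d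

/-- The coboundaries `im d`, viewed inside the cocycles. -/
def CobIn (P : DGPAOn k M) : Submodule k (Cocycles P) :=
  Submodule.comap (Cocycles P).subtype (LinearMap.range P.d)

/-- The cohomology `H(A) = ker d / im d` of a differential graded Poisson algebra. -/
abbrev Cohom (P : DGPAOn k M) : Type u := Cocycles P ⧸ CobIn P

/-- The class map `ker d → H(A)`. -/
def cohCls (P : DGPAOn k M) : Cocycles P →ₗ[k] Cohom P := (CobIn P).mkQ

/-- `R` is the graded Poisson algebra structure on the cohomology of `P` (a differential
graded Poisson algebra structure with zero differential, with the induced grading,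
product and bracket). -/
def IsCohomDGPA (P : DGPAOn k M) (R : DGPAOn k (Cohom P)) : Prop :=
  R.d = 0 ∧
  (∀ n : ℤ, R.gr n =
    Submodule.map (cohCls P) (Submodule.comap (Cocycles P).subtype (P.gr n))) ∧
  (∀ h : P.one ∈ Cocycles P, R.one = cohCls P ⟨P.one, h⟩) ∧
  (∀ (a b : Cocycles P) (h : P.mul (a : M) (b : M) ∈ Cocycles P),
    R.mul (cohCls P a) (cohCls P b) = cohCls P ⟨P.mul (a : M) (b : M), h⟩) ∧
  (∀ (a b : Cocycles P) (h : P.br (a : M) (b : M) ∈ Cocycles P),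
    R.br (cohCls P a) (cohCls P b) = cohCls P ⟨P.br (a : M) (b : M), h⟩)

end IdealsQuotients

end Defs

section ModuleDefs

variable {k : Type u} [Field k]

/-- A left differential graded module structure on `X` over the differential graded
algebra `E`. -/
structure DGModOn {N : Type u} [AddCommGroup N] [Module k N] (E : DGAOn k N)
    (X : Type u) [AddCommGroup X] [Module k X] where
  grm : ℤ → Submodule k X
  decomp : DirectSum.Decomposition grm
  act : N →ₗ[k] X →ₗ[k] X
  act_one : ∀ x : X, act E.one x = x
  act_mul : ∀ (r s : N) (x : X), act (E.mul r s) x = act r (act s x)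
  act_mem : ∀ {i j : ℤ} {r : N} {x : X}, r ∈ E.gr i → x ∈ grm j → act r x ∈ grm (i + j)
  dm : X →ₗ[k] X
  dm_mem : ∀ {i : ℤ} {x : X}, x ∈ grm i → dm x ∈ grm (i + 1)
  dm_sq : ∀ x : X, dm (dm x) = 0
  dm_act : ∀ {i : ℤ} {r : N}, r ∈ E.gr i → ∀ x : X,
    dm (act r x) = act (E.d r) x + ((-1 : k) ^ i) • act r (dm x)

/-- A left differential graded Poisson module structure on `X` over the differential
graded Poisson algebra `P`. -/
structure DGPModOn {M : Type u} [AddCommGroup M] [Module k M] (P : DGPAOn k M)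
    (X : Type u) [AddCommGroup X] [Module k X] where
  grm : ℤ → Submodule k X
  decomp : DirectSum.Decomposition grm
  act : M →ₗ[k] X →ₗ[k] X
  act_one : ∀ x : X, act P.one x = x
  act_mul : ∀ (a b : M) (x : X), act (P.mul a b) x = act a (act b x)
  act_mem : ∀ {i j : ℤ} {a : M} {x : X}, a ∈ P.gr i → x ∈ grm j → act a x ∈ grm (i + j)
  dm : X →ₗ[k] X
  dm_mem : ∀ {i : ℤ} {x : X}, x ∈ grm i → dm x ∈ grm (i + 1)
  dm_sq : ∀ x : X, dm (dm x) = 0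
  dm_act : ∀ {i : ℤ} {a : M}, a ∈ P.gr i → ∀ x : X,
    dm (act a x) = act (P.d a) x + ((-1 : k) ^ i) • act a (dm x)
  bact : M →ₗ[k] X →ₗ[k] X
  bact_mem : ∀ {i j : ℤ} {a : M} {x : X}, a ∈ P.gr i → x ∈ grm j → bact a x ∈ grm (i + j)
  bact_amod : ∀ {i j : ℤ} {a b : M}, a ∈ P.gr i → b ∈ P.gr j → ∀ x : X,
    bact a (act b x) = act (P.br a b) x + ((-1 : k) ^ (i * j)) • act b (bact a x)
  bact_mulact : ∀ {i j : ℤ} {a b : M}, a ∈ P.gr i → b ∈ P.gr j → ∀ x : X,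
    bact (P.mul a b) x = act a (bact b x) + ((-1 : k) ^ (i * j)) • act b (bact a x)
  bact_jacobi : ∀ {i j : ℤ} {a b : M}, a ∈ P.gr i → b ∈ P.gr j → ∀ x : X,
    bact a (bact b x) = bact (P.br a b) x + ((-1 : k) ^ (i * j)) • bact b (bact a x)
  dm_bact : ∀ {i : ℤ} {a : M}, a ∈ P.gr i → ∀ x : X,
    dm (bact a x) = bact (P.d a) x + ((-1 : k) ^ i) • bact a (dm x)

/-- A morphism of left differential graded modules. -/
def IsDGModHom {N X Y : Type u} [AddCommGroup N] [Module k N]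
    [AddCommGroup X] [Module k X] [AddCommGroup Y] [Module k Y]
    {E : DGAOn k N} (W : DGModOn E X) (W' : DGModOn E Y) (f : X →ₗ[k] Y) : Prop :=
  (∀ {n : ℤ} {x : X}, x ∈ W.grm n → f x ∈ W'.grm n) ∧
  (∀ x : X, f (W.dm x) = W'.dm (f x)) ∧
  (∀ (r : N) (x : X), f (W.act r x) = W'.act r (f x))

/-- A morphism of left differential graded Poisson modules. -/
def IsDGPModHom {M X Y : Type u} [AddCommGroup M] [Module k M]
    [AddCommGroup X] [Module k X] [AddCommGroup Y] [Module k Y]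
    {P : DGPAOn k M} (V : DGPModOn P X) (V' : DGPModOn P Y) (f : X →ₗ[k] Y) : Prop :=
  (∀ {n : ℤ} {x : X}, x ∈ V.grm n → f x ∈ V'.grm n) ∧
  (∀ x : X, f (V.dm x) = V'.dm (f x)) ∧
  (∀ (a : M) (x : X), f (V.act a x) = V'.act a (f x)) ∧
  (∀ (a : M) (x : X), f (V.bact a x) = V'.bact a (f x))

/-- The correspondence between a differential graded Poisson module structure over `P`
and a differential graded module structure over `A^e` on the same space. -/
def ModCorr {M X : Type u} [AddCommGroup M] [Module k M] [AddCommGroup X] [Module k X]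
    {P : DGPAOn k M} {E : DGAOn k (Env P)}
    (V : DGPModOn P X) (W : DGModOn E X) : Prop :=
  W.grm = V.grm ∧ W.dm = V.dm ∧
  (∀ (a : M) (x : X), W.act (mgen P a) x = V.act a x) ∧
  (∀ (a : M) (x : X), W.act (hgen P a) x = V.bact a x)

end ModuleDefs

section Helpers

variable {k : Type u} [Field k]
variable {M N X Y : Type u} [AddCommGroup M] [Module k M] [AddCommGroup N] [Module k N]
  [AddCommGroup X] [Module k X] [AddCommGroup Y] [Module k Y]

lemma sgn_add (a b : ℤ) : ((-1 : k) ^ (a + b)) = (-1) ^ a * (-1) ^ b :=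
  zpow_add₀ (by simp) a b

lemma sgn_cases (a : ℤ) : ((-1 : k) ^ a) = 1 ∨ ((-1 : k) ^ a) = -1 := by
  rcases Int.even_or_odd a with h | h
  · left; exact h.neg_one_zpow
  · right; exact h.neg_one_zpow

lemma sgn_sq (a : ℤ) : ((-1 : k) ^ a) * (-1) ^ a = 1 := by
  rcases sgn_cases (k := k) a with h | h <;> simp [h]

/-- Homogeneous elements span. -/
lemma hom_induction (gr : ℤ → Submodule k M) (dec : DirectSum.Decomposition gr)
    (S : Submodule k M) (h : ∀ i, ∀ x ∈ gr i, x ∈ S) (x : M) : x ∈ S := by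
  let := dec
  have h1 : (⨆ i, gr i) = ⊤ := (DirectSum.Decomposition.isInternal gr).submodule_iSup_eq_top
  have : (⨆ i, gr i) ≤ S := iSup_le h
  exact this (h1 ▸ Submodule.mem_top)

lemma hom_lin_ext (gr : ℤ → Submodule k M) (dec : DirectSum.Decomposition gr)
    (f g : M →ₗ[k] N) (h : ∀ i, ∀ x ∈ gr i, f x = g x) : f = g := by
  ext x
  exact hom_induction gr dec (LinearMap.eqLocus f g) h x

lemma hom_bil_ext (gr : ℤ → Submodule k M) (dec : DirectSum.Decomposition gr)
    (gr' : ℤ → Submodule k N) (dec' : DirectSum.Decomposition gr')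
    (f g : M →ₗ[k] N →ₗ[k] X) (h : ∀ i j, ∀ x ∈ gr i, ∀ y ∈ gr' j, f x y = g x y) : f = g := by
  refine hom_lin_ext gr dec f g fun i x hx => ?_
  exact hom_lin_ext gr' dec' _ _ fun j y hy => h i j x hx y hy

lemma sub_grading (gr : ℤ → Submodule k M) (dec : DirectSum.Decomposition gr)
    (H : ℤ → Submodule k M) (hH : ∀ i, H i ≤ gr i) (htop : ∀ x, x ∈ ⨆ i, H i)
    {n : ℤ} {x : M} (hx : x ∈ gr n) : x ∈ H n := by
  let := dec
  have key : ∀ y ∈ ⨆ i, H i, ((DirectSum.decompose gr y n : gr n) : M) ∈ H n := by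
    intro y hy
    induction hy using Submodule.iSup_induction' with
    | mem i y hy =>
      by_cases hin : i = n
      · subst hin
        rw [DirectSum.decompose_of_mem_same gr (hH i hy)]; exact hy
      · rw [DirectSum.decompose_of_mem_ne gr (hH i hy) hin]; exact zero_mem _
    | zero => simp
    | add y z _ _ hy hz => simpa using add_mem hy hz
  have := key x (htop x)
  rwa [DirectSum.decompose_of_mem_same gr hx] at this

lemma env_adjoin (P : DGPAOn k M) (S : Subalgebra k (Env P))
    (hm : ∀ a, mgen P a ∈ S) (hh : ∀ a, hgen P a ∈ S) (x : Env P) : x ∈ S := by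
  obtain ⟨t, rfl⟩ := RingQuot.mkAlgHom_surjective k (EnvRel P) x
  induction t using TensorAlgebra.induction with
  | algebraMap r => rw [AlgHom.commutes]; exact S.algebraMap_mem r
  | ι v =>
    have : v = (v.1, 0) + (0, v.2) := by simp
    rw [this, map_add, map_add]
    exact add_mem (hm v.1) (hh v.2)
  | mul a b ha hb => rw [map_mul]; exact mul_mem ha hb
  | add a b ha hb => rw [map_add]; exact add_mem ha hb

/-- Induction on homogeneous elements of the enveloping algebra. -/
lemma env_induction (P : DGPAOn k M) (E : DGAOn k (Env P))
    (H : ℤ → Submodule k (Env P)) (hH : ∀ i, H i ≤ E.gr i)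
    (h1 : (1 : Env P) ∈ H 0)
    (hmul : ∀ i j x y, x ∈ H i → y ∈ H j → x * y ∈ H (i + j))
    (hm : ∀ i a, a ∈ P.gr i → mgen P a ∈ H i) (hh : ∀ i a, a ∈ P.gr i → hgen P a ∈ H i)
    {n : ℤ} {x : Env P} (hx : x ∈ E.gr n) : x ∈ H n := by
  refine sub_grading E.gr E.decomp H hH (fun x => ?_) hx
  have hle : ∀ i, H i ≤ ⨆ i, H i := fun i => le_iSup H i
  have hmm : ∀ x y : Env P, x ∈ (⨆ i, H i) → y ∈ (⨆ i, H i) → x * y ∈ (⨆ i, H i) := by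
    intro x y hx hy
    induction hx using Submodule.iSup_induction' with
    | mem i x hx =>
      induction hy using Submodule.iSup_induction' with
      | mem j y hy => exact hle _ (hmul i j x y hx hy)
      | zero => simp
      | add y z _ _ hy hz => rw [mul_add]; exact add_mem hy hz
    | zero => simp
    | add y z _ _ hy hz => rw [add_mul]; exact add_mem hy hz
  let S : Subalgebra k (Env P) := Submodule.toSubalgebra (⨆ i, H i) (hle 0 h1) hmm
  refine env_adjoin P S (fun a => ?_) (fun a => ?_) x
  · exact hom_induction P.gr P.decomp ((⨆ i, H i).comap (mgen P))
      (fun i x hx => hle i (hm i x hx)) a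
  · exact hom_induction P.gr P.decomp ((⨆ i, H i).comap (hgen P))
      (fun i x hx => hle i (hh i x hx)) a

lemma mgen_mul (P : DGPAOn k M) (a b : M) : mgen P (P.mul a b) = mgen P a * mgen P b := by
  have := RingQuot.mkAlgHom_rel k (EnvRel.relmul (P := P) a b)
  simpa [mgen] using this

lemma mgen_one (P : DGPAOn k M) : mgen P P.one = 1 := by
  have := RingQuot.mkAlgHom_rel k (EnvRel.relone (P := P))
  simpa [mgen] using this

lemma hgen_mul (P : DGPAOn k M) {i j : ℤ} {a b : M} (ha : a ∈ P.gr i) (hb : b ∈ P.gr j) :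
    hgen P (P.mul a b) = mgen P a * hgen P b + ((-1 : k) ^ (i * j)) • (mgen P b * hgen P a) := by
  have := RingQuot.mkAlgHom_rel k (EnvRel.relhmul (P := P) ha hb)
  simpa [mgen, hgen] using this

lemma mgen_br (P : DGPAOn k M) {i j : ℤ} {a b : M} (ha : a ∈ P.gr i) (hb : b ∈ P.gr j) :
    mgen P (P.br a b) = hgen P a * mgen P b - ((-1 : k) ^ (i * j)) • (mgen P b * hgen P a) := by
  have := RingQuot.mkAlgHom_rel k (EnvRel.relmbr (P := P) ha hb)
  simpa [mgen, hgen] using this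

lemma hgen_br (P : DGPAOn k M) {i j : ℤ} {a b : M} (ha : a ∈ P.gr i) (hb : b ∈ P.gr j) :
    hgen P (P.br a b) = hgen P a * hgen P b - ((-1 : k) ^ (i * j)) • (hgen P b * hgen P a) := by
  have := RingQuot.mkAlgHom_rel k (EnvRel.relhbr (P := P) ha hb)
  simpa [mgen, hgen] using this

lemma env_pair (P : DGPAOn k M) (E : DGAOn k (Env P)) (hE : IsEnvDGA P E) :
    UEPair P E (mgen P) (hgen P) := by
  obtain ⟨hmul, hone, hm, hh, hdm, hdh⟩ := hE
  refine ⟨hm, hh, fun a b => by rw [hmul, mgen_mul], by rw [hone, mgen_one],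
    fun a => (hdm a).symm, fun a => (hdh a).symm, ?_, ?_, ?_⟩
  · intro i j a b ha hb; rw [hmul, hmul, hgen_br P ha hb]
  · intro i j a b ha hb; rw [hmul, hmul, mgen_br P ha hb]
  · intro i j a b ha hb; rw [hmul, hmul, hgen_mul P ha hb]

/-- Lifting at the level of algebras. -/
lemma env_lift_alg (P : DGPAOn k M) (D : DGAOn k N) (f g : M →ₗ[k] N) (h : UEPair P D f g) :
    ∃ φ : Env P →ₗ[k] N, (∀ x y, φ (x * y) = D.mul (φ x) (φ y)) ∧ φ 1 = D.one ∧
      (∀ a, φ (mgen P a) = f a) ∧ (∀ a, φ (hgen P a) = g a) := by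
  obtain ⟨-, -, hmul, hone, -, -, hhbr, hmbr, hhmul⟩ := h
  let : Ring N :=
    { (inferInstance : AddCommGroup N) with
      mul := fun x y => D.mul x y
      one := D.one
      mul_assoc := D.mul_assoc
      one_mul := D.one_mul
      mul_one := D.mul_one
      left_distrib := fun x y z => map_add (D.mul x) y z
      right_distrib := fun x y z => by
        change D.mul (x + y) z = D.mul x z + D.mul y z
        rw [map_add]; rfl
      zero_mul := fun x => by
        change D.mul 0 x = 0
        rw [map_zero]; rfl
      mul_zero := fun x => map_zero (D.mul x) }
  let : Algebra k N := Algebra.ofModule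
    (fun r x y => by
      change D.mul (r • x) y = r • D.mul x y
      rw [map_smul]; rfl)
    (fun r x y => map_smul (D.mul x) r y)
  have hm : ∀ x y : N, x * y = D.mul x y := fun _ _ => rfl
  have h1 : (1 : N) = D.one := rfl
  let F : TensorAlgebra k (M × M) →ₐ[k] N := TensorAlgebra.lift k (f.coprod g)
  have hF : ∀ ⦃x y⦄, EnvRel P x y → F x = F y := by
    intro x y hxy
    induction hxy with
    | relone => simp [F, h1, hone]
    | relmul a b => simp [F, hm, hmul]
    | relhmul ha hb => simp [F, hm, hhmul ha hb]
    | relmbr ha hb => simp [F, hm, hmbr ha hb]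
    | relhbr ha hb => simp [F, hm, hhbr ha hb]
  let Φ : Env P →ₐ[k] N := RingQuot.liftAlgHom k ⟨F, hF⟩
  refine ⟨Φ.toLinearMap, fun x y => map_mul Φ x y, map_one Φ, fun a => ?_, fun a => ?_⟩
  · simp [Φ, mgen, F]
  · simp [Φ, hgen, F]

/-- The universal property (existence part). -/
lemma env_lift (P : DGPAOn k M) (E : DGAOn k (Env P)) (hE : IsEnvDGA P E)
    (D : DGAOn k N) (f g : M →ₗ[k] N) (h : UEPair P D f g) :
    ∃ φ : Env P →ₗ[k] N, IsDGAHom E D φ ∧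
      (∀ a, φ (mgen P a) = f a) ∧ (∀ a, φ (hgen P a) = g a) := by
  obtain ⟨φ, hφm, hφ1, hφf, hφg⟩ := env_lift_alg P D f g h
  obtain ⟨hf, hg, -, -, hdf, hdg, -, -, -⟩ := h
  obtain ⟨hmul, hone, hm, hh, hdm, hdh⟩ := hE
  let H : ℤ → Submodule k (Env P) := fun n =>
    E.gr n ⊓ (D.gr n).comap φ ⊓ LinearMap.eqLocus (φ ∘ₗ E.d) (D.d ∘ₗ φ)
  have hd1 : ∀ (K : Type u) [AddCommGroup K] [Module k K] (F : DGAOn k K), F.d F.one = 0 := by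
    intro K _ _ F
    have := F.d_mul F.one_mem F.one_mem
    rw [F.one_mul, F.mul_one, F.one_mul] at this
    simpa using this
  have key : ∀ {n : ℤ} {x : Env P}, x ∈ E.gr n → x ∈ H n := by
    intro n x hx
    refine env_induction P E H (fun i x hx => hx.1.1) ?_ ?_ ?_ ?_ hx
    · refine ⟨⟨hone ▸ E.one_mem, ?_⟩, ?_⟩
      · change φ 1 ∈ D.gr 0
        rw [hφ1]; exact D.one_mem
      · change φ (E.d 1) = D.d (φ 1)
        rw [hφ1, hd1, ← hone, hd1, map_zero]
    · rintro i j x y ⟨⟨hx1, hx2⟩, hx3⟩ ⟨⟨hy1, hy2⟩, hy3⟩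
      change φ x ∈ D.gr i at hx2
      change φ y ∈ D.gr j at hy2
      change φ (E.d x) = D.d (φ x) at hx3
      change φ (E.d y) = D.d (φ y) at hy3
      refine ⟨⟨hmul x y ▸ E.mul_mem hx1 hy1, ?_⟩, ?_⟩
      · change φ (x * y) ∈ D.gr (i + j)
        rw [hφm]; exact D.mul_mem hx2 hy2
      · change φ (E.d (x * y)) = D.d (φ (x * y))
        rw [hφm, ← hmul, E.d_mul hx1 hy1, D.d_mul hx2 hy2, hmul, hmul, map_add, map_smul,
          hφm, hφm, hx3, hy3]
    · intro i a ha
      refine ⟨⟨hm ha, ?_⟩, ?_⟩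
      · change φ (mgen P a) ∈ D.gr i
        rw [hφf]; exact hf ha
      · change φ (E.d (mgen P a)) = D.d (φ (mgen P a))
        rw [hdm, hφf, hφf, hdf]
    · intro i a ha
      refine ⟨⟨hh ha, ?_⟩, ?_⟩
      · change φ (hgen P a) ∈ D.gr i
        rw [hφg]; exact hg ha
      · change φ (E.d (hgen P a)) = D.d (φ (hgen P a))
        rw [hdh, hφg, hφg, hdg]
  refine ⟨φ, ⟨fun hx => (key hx).1.2, fun x y => by rw [hmul, hφm], by rw [hone, hφ1], ?_⟩,
    hφf, hφg⟩
  intro x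
  exact hom_induction E.gr E.decomp (LinearMap.eqLocus (φ ∘ₗ E.d) (D.d ∘ₗ φ))
    (fun i x hx => (key hx).2) x

/-- The opposite multiplication. -/
lemma exists_opmul (gr : ℤ → Submodule k N) (dec : DirectSum.Decomposition gr)
    (mul : N →ₗ[k] N →ₗ[k] N) :
    ∃ mul' : N →ₗ[k] N →ₗ[k] N, ∀ i j x y, x ∈ gr i → y ∈ gr j →
      mul' x y = ((-1 : k) ^ (i * j)) • mul y x := by
  let := dec
  let B : (DirectSum ℤ fun i => gr i) →ₗ[k] (DirectSum ℤ fun i => gr i) →ₗ[k] N :=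
    DirectSum.toModule k ℤ _ (fun i => LinearMap.flip
      (DirectSum.toModule k ℤ (gr i →ₗ[k] N) (fun j =>
        ((-1 : k) ^ (i * j)) • (mul.domRestrict₁₂ (gr j) (gr i)))))
  let e := (DirectSum.decomposeLinearEquiv gr).toLinearMap
  refine ⟨B.compl₁₂ e e, fun i j x y hx hy => ?_⟩
  have ex : e x = DirectSum.lof k ℤ (fun i => gr i) i ⟨x, hx⟩ := DirectSum.decompose_of_mem gr hx
  have ey : e y = DirectSum.lof k ℤ (fun i => gr i) j ⟨y, hy⟩ := DirectSum.decompose_of_mem gr hy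
  rw [LinearMap.compl₁₂_apply, ex, ey]
  simp only [B, DirectSum.toModule_lof, LinearMap.flip_apply, LinearMap.smul_apply]
  rfl

lemma exists_op (E : DGAOn k N) : ∃ E' : DGAOn k N, IsOpDGA E E' := by
  obtain ⟨mul', hm⟩ := exists_opmul E.gr E.decomp E.mul
  refine ⟨{ gr := E.gr, decomp := E.decomp, mul := mul', one := E.one, one_mem := E.one_mem,
            mul_mem := ?_, mul_assoc := ?_, one_mul := ?_, mul_one := ?_, d := E.d,
            d_mem := E.d_mem, d_sq := E.d_sq, d_mul := ?_ }, rfl, rfl, rfl,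
            fun hx hy => hm _ _ _ _ hx hy⟩
  · intro i j a b ha hb
    rw [hm _ _ _ _ ha hb, add_comm]
    exact Submodule.smul_mem _ _ (E.mul_mem hb ha)
  · intro a b c
    have := hom_bil_ext E.gr E.decomp E.gr E.decomp (mul'.compr₂ mul')
      ((LinearMap.llcomp k N N N ∘ₗ mul').compl₂ mul') ?_
    · exact congrArg (fun f => f a b c) this
    · intro i j x hx y hy
      refine hom_lin_ext E.gr E.decomp _ _ fun l z hz => ?_
      change mul' (mul' x y) z = mul' x (mul' y z)
      rw [hm _ _ _ _ hx hy, hm _ _ _ _ hy hz, map_smul, LinearMap.smul_apply, map_smul,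
        hm _ _ _ _ (E.mul_mem hy hx) hz, hm _ _ _ _ hx (E.mul_mem hz hy), E.mul_assoc,
        smul_smul, smul_smul, ← sgn_add, ← sgn_add]
      congr 2; ring
  · intro a
    have := hom_lin_ext E.gr E.decomp (mul' E.one) LinearMap.id fun i x hx => by
      simp [hm _ _ _ _ E.one_mem hx, E.mul_one]
    exact congrArg (fun f => f a) this
  · intro a
    have := hom_lin_ext E.gr E.decomp (mul'.flip E.one) LinearMap.id fun i x hx => by
      simp [hm _ _ _ _ hx E.one_mem, E.one_mul]
    exact congrArg (fun f => f a) this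
  · intro i j a b ha hb
    rw [hm _ _ _ _ ha hb, hm _ _ _ _ (E.d_mem ha) hb, hm _ _ _ _ ha (E.d_mem hb), map_smul,
      E.d_mul hb ha, add_mul, one_mul, mul_add, mul_one, sgn_add, sgn_add]
    rcases sgn_cases (k := k) i with h1 | h1 <;> rcases sgn_cases (k := k) j with h2 | h2 <;>
      simp only [h1, h2] <;> module

lemma op_symm {P P' : DGPAOn k M} (h : IsOpDGPA P P') : IsOpDGPA P' P := by
  obtain ⟨h1, h2, h3, h4, h5⟩ := h
  exact ⟨h1.symm, fun x y => (h2 x y).symm, h3.symm, h4.symm, fun x y => by rw [h5, neg_neg]⟩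

lemma op_pair {P P' : DGPAOn k M} {D D' : DGAOn k N} (hP : IsOpDGPA P P') (hD : IsOpDGA D D')
    {f g : M →ₗ[k] N} (h : UEPair P D f g) : UEPair P' D' f g := by
  obtain ⟨hf, hg, hmul, hone, hdf, hdg, hhbr, hmbr, hhmul⟩ := h
  obtain ⟨p1, p2, p3, p4, p5⟩ := hP
  obtain ⟨d1, d2, d3, d4⟩ := hD
  refine ⟨?_, ?_, ?_, by rw [p3, d2, hone], fun a => by rw [p4, d3, hdf],
    fun a => by rw [p4, d3, hdg], ?_, ?_, ?_⟩
  · intro n x hx; rw [p1] at hx; rw [d1]; exact hf hx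
  · intro n x hx; rw [p1] at hx; rw [d1]; exact hg hx
  · intro a b
    rw [p2]
    have := hom_bil_ext P.gr P.decomp P.gr P.decomp (P.mul.compr₂ f) (D'.mul.compl₁₂ f f) ?_
    · exact congrArg (fun F => F a b) this
    · intro i j x hx y hy
      change f (P.mul x y) = D'.mul (f x) (f y)
      rw [d4 (hf hx) (hf hy), ← hmul, P.mul_comm hx hy, map_smul]
  · intro i j a b ha hb
    rw [p1] at ha hb
    rw [p5, d4 (hg ha) (hg hb), d4 (hg hb) (hg ha), map_neg, hhbr ha hb, mul_comm j i]
    rcases sgn_cases (k := k) (i * j) with h1 | h1 <;> simp only [h1] <;> module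
  · intro i j a b ha hb
    rw [p1] at ha hb
    rw [p5, d4 (hg ha) (hf hb), d4 (hf hb) (hg ha), map_neg, hmbr ha hb, mul_comm j i]
    rcases sgn_cases (k := k) (i * j) with h1 | h1 <;> simp only [h1] <;> module
  · intro i j a b ha hb
    rw [p1] at ha hb
    have e1 := hmbr ha hb
    have e2 := hmbr hb ha
    rw [P.br_antisymm hb ha, map_neg, map_smul, e1] at e2
    rw [p2, d4 (hf ha) (hg hb), d4 (hf hb) (hg ha), hhmul ha hb]
    rw [mul_comm j i] at *
    rcases sgn_cases (k := k) (i * j) with h1 | h1 <;> simp only [h1] at * <;>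
    first
    | linear_combination (norm := module) e2
    | linear_combination (norm := module) -e2

lemma pair_swap_f {P : DGPAOn k M} {D : DGAOn k N} {f g : M →ₗ[k] N} (h : UEPair P D f g)
    {i j : ℤ} {a b : M} (ha : a ∈ P.gr i) (hb : b ∈ P.gr j) :
    D.mul (f b) (f a) = ((-1 : k) ^ (i * j)) • D.mul (f a) (f b) := by
  obtain ⟨-, -, hmul, -⟩ := h
  rw [← hmul, ← hmul, P.mul_comm hb ha, map_smul, mul_comm j i]

lemma pair_swap_g {P : DGPAOn k M} {D : DGAOn k N} {f g : M →ₗ[k] N} (h : UEPair P D f g)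
    {i j : ℤ} {a b : M} (ha : a ∈ P.gr i) (hb : b ∈ P.gr j) :
    D.mul (g b) (f a) = -(((-1 : k) ^ (i * j)) • D.mul (g a) (f b)) + D.mul (f b) (g a)
      + ((-1 : k) ^ (i * j)) • D.mul (f a) (g b) := by
  obtain ⟨hf, hg, hmul, hone, hdf, hdg, hhbr, hmbr, hhmul⟩ := h
  have e1 := hmbr ha hb
  have e2 := hmbr hb ha
  rw [P.br_antisymm hb ha, map_neg, map_smul, e1] at e2
  rw [mul_comm j i] at *
  rcases sgn_cases (k := k) (i * j) with h1 | h1 <;> simp only [h1] at * <;>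
  linear_combination (norm := module) -e2

/-- The grading pieces of a tensor product. -/
def tgr (g1 : ℤ → Submodule k M) (g2 : ℤ → Submodule k N) (n : ℤ) : Submodule k (M ⊗[k] N) :=
  Submodule.span k {z : M ⊗[k] N |
      ∃ (i j : ℤ) (a : M) (b : N), i + j = n ∧ a ∈ g1 i ∧ b ∈ g2 j ∧ z = a ⊗ₜ[k] b}

lemma tgr_induction {g1 : ℤ → Submodule k M} {g2 : ℤ → Submodule k N} {n : ℤ}
    (S : Submodule k (M ⊗[k] N))
    (h : ∀ i j a b, i + j = n → a ∈ g1 i → b ∈ g2 j → a ⊗ₜ[k] b ∈ S)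
    {x : M ⊗[k] N} (hx : x ∈ tgr g1 g2 n) : x ∈ S := by
  have : tgr g1 g2 n ≤ S := by
    refine Submodule.span_le.2 ?_
    rintro _ ⟨i, j, a, b, h0, ha, hb, rfl⟩
    exact h i j a b h0 ha hb
  exact this hx

lemma tgr_bil {g1 : ℤ → Submodule k M} {g2 : ℤ → Submodule k N} {n m : ℤ}
    (F : M ⊗[k] N →ₗ[k] M ⊗[k] N →ₗ[k] X)
    (h : ∀ i j a b i' j' a' b', i + j = n → a ∈ g1 i → b ∈ g2 j →
      i' + j' = m → a' ∈ g1 i' → b' ∈ g2 j' → F (a ⊗ₜ[k] b) (a' ⊗ₜ[k] b') = 0)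
    {x y : M ⊗[k] N} (hx : x ∈ tgr g1 g2 n) (hy : y ∈ tgr g1 g2 m) : F x y = 0 := by
  refine tgr_induction (LinearMap.ker (F.flip y)) (fun i j a b h0 ha hb => ?_) hx
  exact tgr_induction (LinearMap.ker (F (a ⊗ₜ[k] b)))
    (fun i' j' a' b' h0' ha' hb' => h _ _ _ _ _ _ _ _ h0 ha hb h0' ha' hb') hy

set_option linter.unusedSimpArgs false in
set_option maxHeartbeats 4000000 in
lemma tensor_pair {A B : Type u} [AddCommGroup A] [Module k A] [AddCommGroup B] [Module k B]
    {P : DGPAOn k M} {Q : DGPAOn k N} {E : DGAOn k A} {F : DGAOn k B}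
    {T : DGPAOn k (M ⊗[k] N)} {G : DGAOn k (A ⊗[k] B)}
    {f g : M →ₗ[k] A} {f' g' : N →ₗ[k] B}
    (hP : UEPair P E f g) (hQ : UEPair Q F f' g') (hT : IsTensorDGPA P Q T)
    (hG : IsTensorDGA E F G) :
    UEPair T G (TensorProduct.map f f') (TensorProduct.map f g' + TensorProduct.map g f') := by
  have sf := fun {i j : ℤ} {a b : M} (ha : a ∈ P.gr i) (hb : b ∈ P.gr j) => pair_swap_f hP ha hb
  have sg := fun {i j : ℤ} {a b : M} (ha : a ∈ P.gr i) (hb : b ∈ P.gr j) => pair_swap_g hP ha hb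
  have sf' := fun {i j : ℤ} {a b : N} (ha : a ∈ Q.gr i) (hb : b ∈ Q.gr j) => pair_swap_f hQ ha hb
  have sg' := fun {i j : ℤ} {a b : N} (ha : a ∈ Q.gr i) (hb : b ∈ Q.gr j) => pair_swap_g hQ ha hb
  obtain ⟨hf, hg, hmul, hone, hdf, hdg, hhbr, hmbr, hhmul⟩ := hP
  obtain ⟨hf', hg', hmul', hone', hdf', hdg', hhbr', hmbr', hhmul'⟩ := hQ
  obtain ⟨t1, t2, t3, t4, t5⟩ := hT
  obtain ⟨u1, u2, u3, u4⟩ := hG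
  have t1' : ∀ n, T.gr n = tgr P.gr Q.gr n := t1
  have umem : ∀ {i j : ℤ} {x : A} {y : B}, x ∈ E.gr i → y ∈ F.gr j → x ⊗ₜ[k] y ∈ G.gr (i + j) := by
    intro i j x y hx hy
    rw [u1]; exact Submodule.subset_span ⟨i, j, x, y, rfl, hx, hy, rfl⟩
  refine ⟨?_, ?_, ?_, by rw [t2, u2, TensorProduct.map_tmul, hone, hone'], ?_, ?_, ?_, ?_, ?_⟩
  · intro n x hx
    rw [t1'] at hx
    refine tgr_induction ((G.gr n).comap (TensorProduct.map f f')) ?_ hx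
    rintro i j a b rfl ha hb
    exact umem (hf ha) (hf' hb)
  · intro n x hx
    rw [t1'] at hx
    refine tgr_induction
      ((G.gr n).comap (TensorProduct.map f g' + TensorProduct.map g f')) ?_ hx
    rintro i j a b rfl ha hb
    exact add_mem (umem (hf ha) (hg' hb)) (umem (hg ha) (hf' hb))
  · intro a b
    have := hom_bil_ext T.gr T.decomp T.gr T.decomp
      (T.mul.compr₂ (TensorProduct.map f f'))
      (G.mul.compl₁₂ (TensorProduct.map f f') (TensorProduct.map f f')) ?_
    · exact congrArg (fun F => F a b) this
    · intro n m x hx y hy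
      rw [t1'] at hx hy
      have := tgr_bil (T.mul.compr₂ (TensorProduct.map f f') -
        G.mul.compl₁₂ (TensorProduct.map f f') (TensorProduct.map f f')) ?_ hx hy
      · exact sub_eq_zero.1 this
      · rintro i j a b i' j' a' b' rfl ha hb rfl ha' hb'
        simp [t3 ha hb ha' hb', u3 (hf ha) (hf' hb) (hf ha') (hf' hb'), hmul, hmul']
  · intro x
    have := hom_lin_ext T.gr T.decomp (TensorProduct.map f f' ∘ₗ T.d)
      (G.d ∘ₗ TensorProduct.map f f') ?_
    · exact congrArg (fun F => F x) this
    · intro n x hx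
      rw [t1'] at hx
      refine tgr_induction (LinearMap.eqLocus (TensorProduct.map f f' ∘ₗ T.d)
        (G.d ∘ₗ TensorProduct.map f f')) ?_ hx
      rintro i j a b rfl ha hb
      simp [LinearMap.mem_eqLocus, t4 ha hb, u4 (hf ha) (hf' hb), hdf, hdf']
  · intro x
    have := hom_lin_ext T.gr T.decomp
      ((TensorProduct.map f g' + TensorProduct.map g f') ∘ₗ T.d)
      (G.d ∘ₗ (TensorProduct.map f g' + TensorProduct.map g f')) ?_
    · exact congrArg (fun F => F x) this
    · intro n x hx
      rw [t1'] at hx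
      refine tgr_induction (LinearMap.eqLocus
        ((TensorProduct.map f g' + TensorProduct.map g f') ∘ₗ T.d)
        (G.d ∘ₗ (TensorProduct.map f g' + TensorProduct.map g f'))) ?_ hx
      rintro i j a b rfl ha hb
      simp [LinearMap.mem_eqLocus, t4 ha hb, u4 (hf ha) (hg' hb), u4 (hg ha) (hf' hb),
        hdf, hdf', hdg, hdg']
  · intro n m x y hx hy
    rw [t1'] at hx hy
    generalize hΓ : TensorProduct.map f g' + TensorProduct.map g f' = Γ
    have eΓ : ∀ a b, Γ (a ⊗ₜ[k] b) = f a ⊗ₜ[k] g' b + g a ⊗ₜ[k] f' b := by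
      intro a b; rw [← hΓ]; rfl
    have := tgr_bil (T.br.compr₂ Γ -
        (G.mul.compl₁₂ Γ Γ - ((-1 : k) ^ (n * m)) • (G.mul.compl₁₂ Γ Γ).flip)) ?_ hx hy
    · exact sub_eq_zero.1 this
    · rintro i j a b i' j' a' b' rfl ha hb rfl ha' hb'
      change Γ (T.br (a ⊗ₜ[k] b) (a' ⊗ₜ[k] b')) -
        (G.mul (Γ (a ⊗ₜ[k] b)) (Γ (a' ⊗ₜ[k] b')) - ((-1 : k) ^ ((i + j) * (i' + j'))) •
          G.mul (Γ (a' ⊗ₜ[k] b')) (Γ (a ⊗ₜ[k] b))) = 0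
      rw [t5 ha hb ha' hb', map_smul, map_add]
      simp only [eΓ, map_add, LinearMap.add_apply,
        u3 (hf ha) (hg' hb) (hf ha') (hg' hb'), u3 (hf ha) (hg' hb) (hg ha') (hf' hb'),
        u3 (hg ha) (hf' hb) (hf ha') (hg' hb'), u3 (hg ha) (hf' hb) (hg ha') (hf' hb'),
        u3 (hf ha') (hg' hb') (hf ha) (hg' hb), u3 (hf ha') (hg' hb') (hg ha) (hf' hb),
        u3 (hg ha') (hf' hb') (hf ha) (hg' hb), u3 (hg ha') (hf' hb') (hg ha) (hf' hb),
        hmul, hmul', hhbr ha ha', hmbr ha ha', hhmul ha ha', hhbr' hb hb', hmbr' hb hb',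
        hhmul' hb hb', sf ha ha', sg ha ha', sf' hb hb', sg' hb hb']
      have e : (-1 : k) ^ ((i + j) * (i' + j')) = (-1 : k) ^ (i * i') * (-1 : k) ^ (i * j') *
          ((-1 : k) ^ (i' * j) * (-1 : k) ^ (j * j')) := by
        rw [← sgn_add, ← sgn_add, ← sgn_add]; congr 1; ring
      rw [e]
      rcases sgn_cases (k := k) (i * i') with h1 | h1 <;>
      rcases sgn_cases (k := k) (i * j') with h2 | h2 <;>
      rcases sgn_cases (k := k) (i' * j) with h3 | h3 <;>
      rcases sgn_cases (k := k) (j * j') with h4 | h4 <;>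
      simp only [h1, h2, h3, h4, TensorProduct.tmul_add, TensorProduct.add_tmul,
        TensorProduct.tmul_sub, TensorProduct.sub_tmul, TensorProduct.tmul_neg,
        TensorProduct.neg_tmul, one_smul, neg_smul, mul_one, mul_neg, neg_neg] <;> abel
  · intro n m x y hx hy
    rw [t1'] at hx hy
    generalize hΓ : TensorProduct.map f g' + TensorProduct.map g f' = Γ
    have eΓ : ∀ a b, Γ (a ⊗ₜ[k] b) = f a ⊗ₜ[k] g' b + g a ⊗ₜ[k] f' b := by
      intro a b; rw [← hΓ]; rfl
    generalize hΔ : TensorProduct.map f f' = Δ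
    have eΔ : ∀ a b, Δ (a ⊗ₜ[k] b) = f a ⊗ₜ[k] f' b := by
      intro a b; rw [← hΔ]; rfl
    have := tgr_bil (T.br.compr₂ Δ -
        (G.mul.compl₁₂ Γ Δ - ((-1 : k) ^ (n * m)) • (G.mul.compl₁₂ Δ Γ).flip)) ?_ hx hy
    · exact sub_eq_zero.1 this
    · rintro i j a b i' j' a' b' rfl ha hb rfl ha' hb'
      change Δ (T.br (a ⊗ₜ[k] b) (a' ⊗ₜ[k] b')) -
        (G.mul (Γ (a ⊗ₜ[k] b)) (Δ (a' ⊗ₜ[k] b')) - ((-1 : k) ^ ((i + j) * (i' + j'))) •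
          G.mul (Δ (a' ⊗ₜ[k] b')) (Γ (a ⊗ₜ[k] b))) = 0
      rw [t5 ha hb ha' hb', map_smul, map_add]
      simp only [eΓ, eΔ, map_add, LinearMap.add_apply,
        u3 (hf ha) (hg' hb) (hf ha') (hf' hb'), u3 (hg ha) (hf' hb) (hf ha') (hf' hb'),
        u3 (hf ha') (hf' hb') (hf ha) (hg' hb), u3 (hf ha') (hf' hb') (hg ha) (hf' hb),
        hmul, hmul', hmbr ha ha', hmbr' hb hb', sf ha ha', sf' hb hb']
      have e : (-1 : k) ^ ((i + j) * (i' + j')) = (-1 : k) ^ (i * i') * (-1 : k) ^ (i * j') *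
          ((-1 : k) ^ (i' * j) * (-1 : k) ^ (j * j')) := by
        rw [← sgn_add, ← sgn_add, ← sgn_add]; congr 1; ring
      rw [e]
      rcases sgn_cases (k := k) (i * i') with h1 | h1 <;>
      rcases sgn_cases (k := k) (i * j') with h2 | h2 <;>
      rcases sgn_cases (k := k) (i' * j) with h3 | h3 <;>
      rcases sgn_cases (k := k) (j * j') with h4 | h4 <;>
      simp only [h1, h2, h3, h4, TensorProduct.tmul_add, TensorProduct.add_tmul,
        TensorProduct.tmul_sub, TensorProduct.sub_tmul, TensorProduct.tmul_neg,
        TensorProduct.neg_tmul, one_smul, neg_smul, mul_one, mul_neg, neg_neg] <;> abel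
  · intro n m x y hx hy
    rw [t1'] at hx hy
    generalize hΓ : TensorProduct.map f g' + TensorProduct.map g f' = Γ
    have eΓ : ∀ a b, Γ (a ⊗ₜ[k] b) = f a ⊗ₜ[k] g' b + g a ⊗ₜ[k] f' b := by
      intro a b; rw [← hΓ]; rfl
    generalize hΔ : TensorProduct.map f f' = Δ
    have eΔ : ∀ a b, Δ (a ⊗ₜ[k] b) = f a ⊗ₜ[k] f' b := by
      intro a b; rw [← hΔ]; rfl
    have := tgr_bil (T.mul.compr₂ Γ -
        (G.mul.compl₁₂ Δ Γ + ((-1 : k) ^ (n * m)) • (G.mul.compl₁₂ Δ Γ).flip)) ?_ hx hy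
    · exact sub_eq_zero.1 this
    · rintro i j a b i' j' a' b' rfl ha hb rfl ha' hb'
      change Γ (T.mul (a ⊗ₜ[k] b) (a' ⊗ₜ[k] b')) -
        (G.mul (Δ (a ⊗ₜ[k] b)) (Γ (a' ⊗ₜ[k] b')) + ((-1 : k) ^ ((i + j) * (i' + j'))) •
          G.mul (Δ (a' ⊗ₜ[k] b')) (Γ (a ⊗ₜ[k] b))) = 0
      rw [t3 ha hb ha' hb', map_smul]
      simp only [eΓ, eΔ, map_add, LinearMap.add_apply,
        u3 (hf ha) (hf' hb) (hf ha') (hg' hb'), u3 (hf ha) (hf' hb) (hg ha') (hf' hb'),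
        u3 (hf ha') (hf' hb') (hf ha) (hg' hb), u3 (hf ha') (hf' hb') (hg ha) (hf' hb),
        hmul, hmul', hhmul ha ha', hhmul' hb hb', sf ha ha', sf' hb hb']
      have e : (-1 : k) ^ ((i + j) * (i' + j')) = (-1 : k) ^ (i * i') * (-1 : k) ^ (i * j') *
          ((-1 : k) ^ (i' * j) * (-1 : k) ^ (j * j')) := by
        rw [← sgn_add, ← sgn_add, ← sgn_add]; congr 1; ring
      rw [e]
      rcases sgn_cases (k := k) (i * i') with h1 | h1 <;>
      rcases sgn_cases (k := k) (i * j') with h2 | h2 <;>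
      rcases sgn_cases (k := k) (i' * j) with h3 | h3 <;>
      rcases sgn_cases (k := k) (j * j') with h4 | h4 <;>
      simp only [h1, h2, h3, h4, TensorProduct.tmul_add, TensorProduct.add_tmul,
        TensorProduct.tmul_sub, TensorProduct.sub_tmul, TensorProduct.tmul_neg,
        TensorProduct.neg_tmul, one_smul, neg_smul, mul_one, mul_neg, neg_neg] <;> abel

lemma pair_comp {P : DGPAOn k M} {Q : DGPAOn k X} {D : DGAOn k N} {f g : X →ₗ[k] N}
    (h : UEPair Q D f g) {p : M →ₗ[k] X} (hp : IsDGPAHom P Q p) :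
    UEPair P D (f ∘ₗ p) (g ∘ₗ p) := by
  obtain ⟨hf, hg, hmul, hone, hdf, hdg, hhbr, hmbr, hhmul⟩ := h
  obtain ⟨p1, p2, p3, p4, p5⟩ := hp
  refine ⟨fun hx => hf (p1 hx), fun hx => hg (p1 hx), fun a b => ?_, ?_, fun a => ?_,
    fun a => ?_, ?_, ?_, ?_⟩
  · simp [p2, hmul]
  · simp [p3, hone]
  · simp [p4, hdf]
  · simp [p4, hdg]
  · intro i j a b ha hb; simp [p5, hhbr (p1 ha) (p1 hb)]
  · intro i j a b ha hb; simp [p5, hmbr (p1 ha) (p1 hb)]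
  · intro i j a b ha hb; simp [p2, hhmul (p1 ha) (p1 hb)]

lemma d_one (P : DGPAOn k M) : P.d P.one = 0 := by
  have := P.d_mul P.one_mem P.one_mem
  rw [P.one_mul, P.mul_one, P.one_mul] at this
  simpa using this

lemma br_one (P : DGPAOn k M) (a : M) : P.br a P.one = 0 := by
  have := hom_lin_ext P.gr P.decomp (P.br.flip P.one) 0 fun i x hx => by
    have := P.br_deriv hx P.one_mem P.one_mem
    rw [P.one_mul, P.mul_one, P.one_mul] at this
    simpa using this
  exact congrArg (fun f => f a) this

lemma one_br (P : DGPAOn k M) (a : M) : P.br P.one a = 0 := by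
  have := hom_lin_ext P.gr P.decomp (P.br P.one) 0 fun i x hx => by
    rw [P.br_antisymm P.one_mem hx, br_one]; simp
  exact congrArg (fun f => f a) this

lemma inl_hom {P : DGPAOn k M} {Q : DGPAOn k N} {T : DGPAOn k (M ⊗[k] N)}
    (hT : IsTensorDGPA P Q T) :
    IsDGPAHom P T ((TensorProduct.mk k M N).flip Q.one) := by
  obtain ⟨t1, t2, t3, t4, t5⟩ := hT
  refine ⟨?_, ?_, ?_, ?_, ?_⟩
  · intro n x hx
    rw [t1]
    exact Submodule.subset_span ⟨n, 0, x, Q.one, by simp, hx, Q.one_mem, rfl⟩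
  · intro x y
    have := hom_bil_ext P.gr P.decomp P.gr P.decomp
      (P.mul.compr₂ ((TensorProduct.mk k M N).flip Q.one))
      (T.mul.compl₁₂ ((TensorProduct.mk k M N).flip Q.one)
        ((TensorProduct.mk k M N).flip Q.one)) ?_
    · exact congrArg (fun f => f x y) this
    · intro i j x hx y hy
      simp [t3 hx Q.one_mem hy Q.one_mem, Q.one_mul]
  · exact t2.symm
  · intro x
    have := hom_lin_ext P.gr P.decomp ((TensorProduct.mk k M N).flip Q.one ∘ₗ P.d)
      (T.d ∘ₗ (TensorProduct.mk k M N).flip Q.one) ?_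
    · exact congrArg (fun f => f x) this
    · intro i x hx
      simp [t4 hx Q.one_mem, d_one]
  · intro x y
    have := hom_bil_ext P.gr P.decomp P.gr P.decomp
      (P.br.compr₂ ((TensorProduct.mk k M N).flip Q.one))
      (T.br.compl₁₂ ((TensorProduct.mk k M N).flip Q.one)
        ((TensorProduct.mk k M N).flip Q.one)) ?_
    · exact congrArg (fun f => f x y) this
    · intro i j x hx y hy
      simp [t5 hx Q.one_mem hy Q.one_mem, Q.one_mul, br_one]

lemma inr_hom {P : DGPAOn k M} {Q : DGPAOn k N} {T : DGPAOn k (M ⊗[k] N)}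
    (hT : IsTensorDGPA P Q T) :
    IsDGPAHom Q T (TensorProduct.mk k M N P.one) := by
  obtain ⟨t1, t2, t3, t4, t5⟩ := hT
  refine ⟨?_, ?_, ?_, ?_, ?_⟩
  · intro n x hx
    rw [t1]
    exact Submodule.subset_span ⟨0, n, P.one, x, by simp, P.one_mem, hx, rfl⟩
  · intro x y
    have := hom_bil_ext Q.gr Q.decomp Q.gr Q.decomp
      (Q.mul.compr₂ (TensorProduct.mk k M N P.one))
      (T.mul.compl₁₂ (TensorProduct.mk k M N P.one) (TensorProduct.mk k M N P.one)) ?_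
    · exact congrArg (fun f => f x y) this
    · intro i j x hx y hy
      simp [t3 P.one_mem hx P.one_mem hy, P.one_mul]
  · exact t2.symm
  · intro x
    have := hom_lin_ext Q.gr Q.decomp (TensorProduct.mk k M N P.one ∘ₗ Q.d)
      (T.d ∘ₗ TensorProduct.mk k M N P.one) ?_
    · exact congrArg (fun f => f x) this
    · intro i x hx
      simp [t4 P.one_mem hx, d_one]
  · intro x y
    have := hom_bil_ext Q.gr Q.decomp Q.gr Q.decomp
      (Q.br.compr₂ (TensorProduct.mk k M N P.one))
      (T.br.compl₁₂ (TensorProduct.mk k M N P.one) (TensorProduct.mk k M N P.one)) ?_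
    · exact congrArg (fun f => f x y) this
    · intro i j x hx y hy
      simp [t5 P.one_mem hx P.one_mem hy, P.one_mul, br_one]

lemma hgen_one (P : DGPAOn k M) : hgen P P.one = 0 := by
  have := hgen_mul P P.one_mem P.one_mem
  rw [P.one_mul, mgen_one] at this
  simpa using this

lemma comm_mul {R : Type u} [Ring R] [Algebra k R] {p p' q : ℤ} {u u' v : R}
    (h : u * v = ((-1 : k) ^ (p * q)) • (v * u)) (h' : u' * v = ((-1 : k) ^ (p' * q)) • (v * u')) :
    (u * u') * v = ((-1 : k) ^ ((p + p') * q)) • (v * (u * u')) := by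
  rw [mul_assoc, h', mul_smul_comm, ← mul_assoc, h, smul_mul_assoc, smul_smul, ← sgn_add,
    mul_assoc]
  congr 2; ring

lemma comm_symm {R : Type u} [Ring R] [Algebra k R] {p q : ℤ} {u v : R}
    (h : u * v = ((-1 : k) ^ (p * q)) • (v * u)) : v * u = ((-1 : k) ^ (q * p)) • (u * v) := by
  rw [h, smul_smul, mul_comm q p, sgn_sq, one_smul]

lemma main_aux
    (P Pop : DGPAOn k M) (hop : IsOpDGPA P Pop)
    (T : DGPAOn k (M ⊗[k] M)) (hT : IsTensorDGPA P Pop T)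
    (ET : DGAOn k (Env T)) (hET : IsEnvDGA T ET)
    (E : DGAOn k (Env P)) (hE : IsEnvDGA P E)
    (Eop : DGAOn k (Env P)) (hEop : IsOpDGA E Eop)
    (G : DGAOn k (Env P ⊗[k] Env P)) (hG : IsTensorDGA E Eop G) :
    ∃ φ : Env T →ₗ[k] Env P ⊗[k] Env P,
      IsDGAHom ET G φ ∧ Function.Bijective φ := by
  have hPE := env_pair P E hE
  have hTE := env_pair T ET hET
  obtain ⟨φ, hφ, hφm, hφh⟩ := env_lift T ET hET G _ _
    (tensor_pair hPE (op_pair hop hEop hPE) hT hG)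
  refine ⟨φ, hφ, ?_⟩
  obtain ⟨φ1, φ2, φ3, φ4⟩ := hφ
  obtain ⟨i, ⟨i1, i2, i3, i4⟩, him, hih⟩ := env_lift P E hE ET _ _ (pair_comp hTE (inl_hom hT))
  obtain ⟨ETop, hETop⟩ := exists_op ET
  obtain ⟨j, ⟨j1, j2, j3, j4⟩, hjm, hjh⟩ := env_lift P E hE ETop _ _
    (op_pair (op_symm hop) hETop (pair_comp hTE (inr_hom hT)))
  obtain ⟨o1, o2, o3, o4⟩ := hETop
  obtain ⟨q1, q2, q3, q4⟩ := hEop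
  obtain ⟨p1, p2, p3, p4, p5⟩ := hop
  have linl := inl_hom hT
  have linr := inr_hom hT
  obtain ⟨t1, t2, t3, t4, t5⟩ := hT
  obtain ⟨u1, u2, u3, u4⟩ := hG
  obtain ⟨m1, m2, m3, m4, m5, m6⟩ := hET
  obtain ⟨e1, e2, e3, e4, e5, e6⟩ := hE
  have him' : ∀ a, i (mgen P a) = mgen T (a ⊗ₜ[k] P.one) := fun a => by rw [him, ← p3]; rfl
  have hih' : ∀ a, i (hgen P a) = hgen T (a ⊗ₜ[k] P.one) := fun a => by rw [hih, ← p3]; rfl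
  have hjm' : ∀ a, j (mgen P a) = mgen T (P.one ⊗ₜ[k] a) := fun a => by rw [hjm]; rfl
  have hjh' : ∀ a, j (hgen P a) = hgen T (P.one ⊗ₜ[k] a) := fun a => by rw [hjh]; rfl
  have E1 : (1 : Env P) ∈ E.gr 0 := e2 ▸ E.one_mem
  have Emul : ∀ {p q : ℤ} {x y : Env P}, x ∈ E.gr p → y ∈ E.gr q → x * y ∈ E.gr (p + q) :=
    fun hx hy => e1 _ _ ▸ E.mul_mem hx hy
  have i1' : i 1 = 1 := by rw [← e2, i3, m2]
  have j1' : j 1 = 1 := by rw [← e2, j3, o2, m2]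
  have imul : ∀ x y, i (x * y) = i x * i y := fun x y => by rw [← e1, i2, m1]
  have jmem : ∀ {n : ℤ} {x}, x ∈ E.gr n → j x ∈ ET.gr n := fun hx => o1 ▸ j1 hx
  have jmul : ∀ {p q : ℤ} {x y : Env P}, x ∈ E.gr p → y ∈ E.gr q →
      j (x * y) = ((-1 : k) ^ (p * q)) • (j y * j x) := by
    intro p q x y hx hy
    rw [← e1, j2, o4 (jmem hx) (jmem hy), m1]
  have φmul : ∀ x y, φ (x * y) = G.mul (φ x) (φ y) := fun x y => by rw [← m1, φ2]
  have u3' : ∀ {i j i' j' : ℤ} {x x' y y' : Env P},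
      x ∈ E.gr i → y ∈ E.gr j → x' ∈ E.gr i' → y' ∈ E.gr j' →
      G.mul (x ⊗ₜ[k] y) (x' ⊗ₜ[k] y') =
        ((-1 : k) ^ (i' * j)) • ((x * x') ⊗ₜ[k] (((-1 : k) ^ (j * j')) • (y' * y))) := by
    intro i j i' j' x x' y y' hx hy hx' hy'
    rw [u3 hx (q1 ▸ hy) hx' (q1 ▸ hy'), q4 hy hy', e1, e1]
  -- the composites with the two inclusions
  have hφi : ∀ {n : ℤ} {x : Env P}, x ∈ E.gr n → φ (i x) = x ⊗ₜ[k] 1 := by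
    intro n x hx
    refine (env_induction P E (fun n => E.gr n ⊓ LinearMap.eqLocus (φ ∘ₗ i)
      ((TensorProduct.mk k (Env P) (Env P)).flip 1)) (fun i x hx => hx.1) ?_ ?_ ?_ ?_ hx).2
    · refine ⟨E1, ?_⟩
      change φ (i 1) = 1 ⊗ₜ[k] 1
      rw [i1', ← m2, φ3, u2, q2, e2]
    · rintro p q x y ⟨hx, hx'⟩ ⟨hy, hy'⟩
      change φ (i x) = x ⊗ₜ[k] 1 at hx'
      change φ (i y) = y ⊗ₜ[k] 1 at hy'
      refine ⟨Emul hx hy, ?_⟩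
      change φ (i (x * y)) = (x * y) ⊗ₜ[k] 1
      rw [imul, φmul, hx', hy', u3' hx E1 hy E1]
      simp
    · intro n a ha
      refine ⟨e3 ha, ?_⟩
      change φ (i (mgen P a)) = mgen P a ⊗ₜ[k] 1
      rw [him', hφm, TensorProduct.map_tmul, mgen_one]
    · intro n a ha
      refine ⟨e4 ha, ?_⟩
      change φ (i (hgen P a)) = hgen P a ⊗ₜ[k] 1
      rw [hih', hφh, LinearMap.add_apply, TensorProduct.map_tmul, TensorProduct.map_tmul,
        mgen_one, hgen_one]
      simp
  have hφj : ∀ {n : ℤ} {x : Env P}, x ∈ E.gr n → φ (j x) = 1 ⊗ₜ[k] x := by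
    intro n x hx
    refine (env_induction P E (fun n => E.gr n ⊓ LinearMap.eqLocus (φ ∘ₗ j)
      (TensorProduct.mk k (Env P) (Env P) 1)) (fun i x hx => hx.1) ?_ ?_ ?_ ?_ hx).2
    · refine ⟨E1, ?_⟩
      change φ (j 1) = 1 ⊗ₜ[k] 1
      rw [j1', ← m2, φ3, u2, q2, e2]
    · rintro p q x y ⟨hx, hx'⟩ ⟨hy, hy'⟩
      change φ (j x) = 1 ⊗ₜ[k] x at hx'
      change φ (j y) = 1 ⊗ₜ[k] y at hy'
      refine ⟨Emul hx hy, ?_⟩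
      change φ (j (x * y)) = 1 ⊗ₜ[k] (x * y)
      rw [jmul hx hy, map_smul, φmul, hx', hy', u3' E1 hy E1 hx, mul_comm q p]
      rw [TensorProduct.tmul_smul, smul_comm ((-1 : k) ^ (p * q)), smul_smul ((-1 : k) ^ (p * q)),
        sgn_sq]
      simp
    · intro n a ha
      refine ⟨e3 ha, ?_⟩
      change φ (j (mgen P a)) = 1 ⊗ₜ[k] mgen P a
      rw [hjm', hφm, TensorProduct.map_tmul, mgen_one]
    · intro n a ha
      refine ⟨e4 ha, ?_⟩
      change φ (j (hgen P a)) = 1 ⊗ₜ[k] hgen P a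
      rw [hjh', hφh, LinearMap.add_apply, TensorProduct.map_tmul, TensorProduct.map_tmul,
        mgen_one, hgen_one]
      simp
  -- graded commutation of the images of `i` and `j`
  have Pone : P.one ∈ Pop.gr 0 := p1 ▸ P.one_mem
  have la : ∀ {n : ℤ} {a : M}, a ∈ P.gr n → a ⊗ₜ[k] P.one ∈ T.gr n := fun ha => p3 ▸ linl.1 ha
  have lb : ∀ {n : ℤ} {a : M}, a ∈ P.gr n → P.one ⊗ₜ[k] a ∈ T.gr n :=
    fun ha => linr.1 (p1.symm ▸ ha)
  have Tbr : ∀ {p q : ℤ} {a b : M}, a ∈ P.gr p → b ∈ P.gr q →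
      T.br (a ⊗ₜ[k] P.one) (P.one ⊗ₜ[k] b) = 0 := by
    intro p q a b ha hb
    rw [t5 ha Pone P.one_mem (p1 ▸ hb), br_one, p5, one_br]
    simp
  have Tbr' : ∀ {p q : ℤ} {a b : M}, a ∈ P.gr p → b ∈ P.gr q →
      T.br (P.one ⊗ₜ[k] b) (a ⊗ₜ[k] P.one) = 0 := by
    intro p q a b ha hb
    rw [T.br_antisymm (lb hb) (la ha), Tbr ha hb]
    simp
  have cmm : ∀ {p q : ℤ} {a b : M}, a ∈ P.gr p → b ∈ P.gr q →
      i (mgen P a) * j (mgen P b) = ((-1 : k) ^ (p * q)) • (j (mgen P b) * i (mgen P a)) := by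
    intro p q a b ha hb
    rw [him', hjm', ← mgen_mul, ← mgen_mul, T.mul_comm (la ha) (lb hb), map_smul]
  have chm : ∀ {p q : ℤ} {a b : M}, a ∈ P.gr p → b ∈ P.gr q →
      i (hgen P a) * j (mgen P b) = ((-1 : k) ^ (p * q)) • (j (mgen P b) * i (hgen P a)) := by
    intro p q a b ha hb
    have := mgen_br T (la ha) (lb hb)
    rw [Tbr ha hb, map_zero] at this
    rw [hih', hjm']
    exact sub_eq_zero.1 this.symm
  have cmh : ∀ {p q : ℤ} {a b : M}, a ∈ P.gr p → b ∈ P.gr q →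
      i (mgen P a) * j (hgen P b) = ((-1 : k) ^ (p * q)) • (j (hgen P b) * i (mgen P a)) := by
    intro p q a b ha hb
    have := mgen_br T (lb hb) (la ha)
    rw [Tbr' ha hb, map_zero] at this
    rw [him', hjh']
    exact comm_symm (sub_eq_zero.1 this.symm)
  have chh : ∀ {p q : ℤ} {a b : M}, a ∈ P.gr p → b ∈ P.gr q →
      i (hgen P a) * j (hgen P b) = ((-1 : k) ^ (p * q)) • (j (hgen P b) * i (hgen P a)) := by
    intro p q a b ha hb
    have := hgen_br T (la ha) (lb hb)
    rw [Tbr ha hb, map_zero] at this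
    rw [hih', hjh']
    exact sub_eq_zero.1 this.symm
  -- commutation of everything in the image of `i` with a suitable element
  have ext1 : ∀ (q : ℤ) (v : Env T),
      (∀ p a, a ∈ P.gr p → i (mgen P a) * v = ((-1 : k) ^ (p * q)) • (v * i (mgen P a))) →
      (∀ p a, a ∈ P.gr p → i (hgen P a) * v = ((-1 : k) ^ (p * q)) • (v * i (hgen P a))) →
      ∀ p x, x ∈ E.gr p → i x * v = ((-1 : k) ^ (p * q)) • (v * i x) := by
    intro q v hv1 hv2 p x hx
    refine (env_induction P E (fun p => E.gr p ⊓ LinearMap.eqLocus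
      (LinearMap.mulRight k v ∘ₗ i) (((-1 : k) ^ (p * q)) • (LinearMap.mulLeft k v ∘ₗ i)))
      (fun i x hx => hx.1) ?_ ?_ ?_ ?_ hx).2
    · refine ⟨E1, ?_⟩
      change i 1 * v = ((-1 : k) ^ (0 * q)) • (v * i 1)
      rw [i1']; simp
    · rintro p p' x y ⟨hx, hx'⟩ ⟨hy, hy'⟩
      change i x * v = ((-1 : k) ^ (p * q)) • (v * i x) at hx'
      change i y * v = ((-1 : k) ^ (p' * q)) • (v * i y) at hy'
      refine ⟨Emul hx hy, ?_⟩
      change i (x * y) * v = ((-1 : k) ^ ((p + p') * q)) • (v * i (x * y))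
      rw [imul]
      exact comm_mul hx' hy'
    · exact fun p a ha => ⟨e3 ha, hv1 p a ha⟩
    · exact fun p a ha => ⟨e4 ha, hv2 p a ha⟩
  have comm : ∀ {p q : ℤ} {x y : Env P}, x ∈ E.gr p → y ∈ E.gr q →
      j y * i x = ((-1 : k) ^ (q * p)) • (i x * j y) := by
    intro p q x y hx hy
    refine (env_induction P E (fun q => E.gr q ⊓ LinearMap.eqLocus
      (LinearMap.mulRight k (i x) ∘ₗ j) (((-1 : k) ^ (q * p)) • (LinearMap.mulLeft k (i x) ∘ₗ j)))
      (fun i x hx => hx.1) ?_ ?_ ?_ ?_ hy).2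
    · refine ⟨E1, ?_⟩
      change j 1 * i x = ((-1 : k) ^ (0 * p)) • (i x * j 1)
      rw [j1']; simp
    · rintro q q' y z ⟨hy, hy'⟩ ⟨hz, hz'⟩
      change j y * i x = ((-1 : k) ^ (q * p)) • (i x * j y) at hy'
      change j z * i x = ((-1 : k) ^ (q' * p)) • (i x * j z) at hz'
      refine ⟨Emul hy hz, ?_⟩
      change j (y * z) * i x = ((-1 : k) ^ ((q + q') * p)) • (i x * j (y * z))
      rw [jmul hy hz, smul_mul_assoc, comm_mul hz' hy', mul_smul_comm, smul_comm, add_comm q q']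
    · exact fun q a ha => ⟨e3 ha, comm_symm (ext1 q _ (fun p b hb => cmm hb ha)
        (fun p b hb => chm hb ha) p x hx)⟩
    · exact fun q a ha => ⟨e4 ha, comm_symm (ext1 q _ (fun p b hb => cmh hb ha)
        (fun p b hb => chh hb ha) p x hx)⟩
  -- the inverse
  let ψ : Env P ⊗[k] Env P →ₗ[k] Env T :=
    TensorProduct.lift ((LinearMap.mul k (Env T)).compl₁₂ i j)
  have hψ : ∀ x y, ψ (x ⊗ₜ[k] y) = i x * j y := fun x y => by simp [ψ]
  have right : ∀ z, φ (ψ z) = z := by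
    intro z
    have : φ ∘ₗ ψ = LinearMap.id := by
      have hb := hom_bil_ext (X := Env P ⊗[k] Env P) E.gr E.decomp E.gr E.decomp
        ((TensorProduct.mk k (Env P) (Env P)).compr₂ (φ ∘ₗ ψ))
        (TensorProduct.mk k (Env P) (Env P)) ?_
      · exact TensorProduct.ext' fun x y => congrArg (fun f => f x y) hb
      intro p q x hx y hy
      change φ (ψ (x ⊗ₜ[k] y)) = x ⊗ₜ[k] y
      rw [hψ, φmul, hφi hx, hφj hy, u3' hx E1 E1 hy]
      simp
    exact congrArg (fun f => f z) this
  have ijmul : ∀ x y x' y', (i x * j y) * (i x' * j y') ∈ LinearMap.range ψ := by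
    intro x y x' y'
    have a1 : ∀ {p q : ℤ} {x y}, x ∈ E.gr p → y ∈ E.gr q →
        ∀ z w, (i w * j x) * (i y * j z) ∈ LinearMap.range ψ := by
      intro p q x y hx hy z w
      refine hom_induction E.gr E.decomp ((LinearMap.range ψ).comap
        (LinearMap.mulLeft k (i w * j x) ∘ₗ LinearMap.mulLeft k (i y) ∘ₗ j)) ?_ z
      intro r z hz
      change (i w * j x) * (i y * j z) ∈ LinearMap.range ψ
      have h1 : (i w * j x) * (i y * j z) =
          (((-1 : k) ^ (p * q)) * ((-1 : k) ^ (r * p))) • ψ ((w * y) ⊗ₜ[k] (z * x)) := by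
        rw [hψ, imul, jmul hz hx, mul_smul_comm, smul_smul, mul_assoc ((-1 : k) ^ (p * q)),
          sgn_sq, mul_one, mul_assoc (i w), ← mul_assoc (j x), comm hy hx, smul_mul_assoc,
          mul_smul_comm]
        simp only [mul_assoc]
      rw [h1]
      exact Submodule.smul_mem _ _ ⟨_, rfl⟩
    refine hom_induction E.gr E.decomp ((LinearMap.range ψ).comap
        (LinearMap.mulRight k (i x' * j y') ∘ₗ LinearMap.mulLeft k (i x) ∘ₗ j)) ?_ y
    intro p y hy
    refine hom_induction E.gr E.decomp ((LinearMap.range ψ).comap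
        (LinearMap.mulLeft k (i x * j y) ∘ₗ LinearMap.mulRight k (j y') ∘ₗ i)) ?_ x'
    intro q x' hx'
    exact a1 hy hx' y' x
  have rmul : ∀ u v, u ∈ LinearMap.range ψ → v ∈ LinearMap.range ψ →
      u * v ∈ LinearMap.range ψ := by
    rintro _ _ ⟨u, rfl⟩ ⟨v, rfl⟩
    induction u using TensorProduct.induction_on with
    | zero => simp
    | add u u' hu hu' => rw [map_add, add_mul]; exact add_mem hu hu'
    | tmul x y =>
      induction v using TensorProduct.induction_on with
      | zero => simp
      | add u u' hu hu' => rw [map_add, mul_add]; exact add_mem hu hu'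
      | tmul x' y' => rw [hψ, hψ]; exact ijmul x y x' y'
  have tdec : ∀ (S : Submodule k (M ⊗[k] M)),
      (∀ p q a b, a ∈ P.gr p → b ∈ P.gr q → a ⊗ₜ[k] b ∈ S) → ∀ t, t ∈ S := by
    intro S hS t
    refine hom_induction T.gr T.decomp S (fun n x hx => ?_) t
    rw [t1] at hx
    refine tgr_induction S ?_ hx
    rintro p q a b - ha hb
    exact hS p q a b ha (p1 ▸ hb)
  have tsplit : ∀ {p q : ℤ} {a b : M}, a ∈ P.gr p → b ∈ P.gr q →
      a ⊗ₜ[k] b = T.mul (a ⊗ₜ[k] P.one) (P.one ⊗ₜ[k] b) := by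
    intro p q a b ha hb
    rw [t3 ha Pone P.one_mem (p1 ▸ hb), P.mul_one, p2, P.one_mul]
    simp
  have surj : ∀ z, z ∈ LinearMap.range ψ := by
    let S : Subalgebra k (Env T) := Submodule.toSubalgebra (LinearMap.range ψ)
      ⟨1 ⊗ₜ[k] 1, by rw [hψ, i1', j1', mul_one]⟩ rmul
    refine env_adjoin T S (fun t => ?_) (fun t => ?_)
    · refine tdec ((LinearMap.range ψ).comap (mgen T)) ?_ t
      intro p q a b ha hb
      refine ⟨mgen P a ⊗ₜ[k] mgen P b, ?_⟩
      rw [hψ, him', hjm', ← mgen_mul, ← tsplit ha hb]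
    · refine tdec ((LinearMap.range ψ).comap (hgen T)) ?_ t
      intro p q a b ha hb
      refine ⟨mgen P a ⊗ₜ[k] hgen P b + hgen P a ⊗ₜ[k] mgen P b, ?_⟩
      rw [map_add, hψ, hψ, chm ha hb, tsplit ha hb, hgen_mul T (la ha) (lb hb),
        him', hjm', hih', hjh']
  refine ⟨fun z w hzw => ?_, fun z => ⟨ψ z, right z⟩⟩
  obtain ⟨z, rfl⟩ := surj z
  obtain ⟨w, rfl⟩ := surj w
  rw [right, right] at hzw
  rw [hzw]

end Helpers

/-- for `A^𝓔 := A ⊗ A^{op}` (a differential graded Poisson algebra with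
the tensor product structure), `(A^𝓔)^e ≅ (A^e)^𝓔 = A^e ⊗ (A^e)^{op}` as differential
graded algebras. -/
theorem stmt_19 (k : Type u) [Field k] (M : Type u) [AddCommGroup M] [Module k M]
    (P Pop : DGPAOn k M) (hop : IsOpDGPA P Pop)
    (T : DGPAOn k (M ⊗[k] M)) (hT : IsTensorDGPA P Pop T)
    (ET : DGAOn k (Env T)) (hET : IsEnvDGA T ET)
    (E : DGAOn k (Env P)) (hE : IsEnvDGA P E)
    (Eop : DGAOn k (Env P)) (hEop : IsOpDGA E Eop)
    (G : DGAOn k (Env P ⊗[k] Env P)) (hG : IsTensorDGA E Eop G) :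
    ∃ φ : Env T →ₗ[k] Env P ⊗[k] Env P,
      IsDGAHom ET G φ ∧ Function.Bijective φ := by
  exact main_aux P Pop hop T hT ET hET E hE Eop hEop G hG

end DGPaper

end
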